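/- Suppose 𝒴 = span(ℝ^N_0, Y_1,…,Y_R) is a finite-dimensional vector subspace of L^0(Ω,𝐅_T,P) with ℝ^N_0 ⊆ 𝒴, and NCA(𝒴) holds. Then for every f ∈ L^0(Ω,𝐅_T,P) and every φ ∈ L^0(Ω,𝐅_T,P) such that max{|f^i|, |Y^i_1|, …, |Y^i_R|} ≤ φ^i P-a.s. for every i, the set of NCA(𝒴)-prices of f satisfies Π(f) = {(E_{Q^1}[f^1], …, E_{Q^N}[f^N]) : Q ∈ ℳ^φ_e(𝒴)}. -/

import Mathlib

open MeasureTheory Filter Topology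

namespace CollectiveArb

variable {Ω : Type*}

/-- Terminal gains `K_i` of admissible (predictable) strategies for an agent with
filtration `F`, trading the assets indexed by `A`, over times `1,…,T`. -/
def gainsSet {J : ℕ} (F : ℕ → MeasurableSpace Ω) (T : ℕ)
    (A : Finset (Fin J)) (X : Fin J → ℕ → Ω → ℝ) : Set (Ω → ℝ) :=
  { g | ∃ H : Fin J → ℕ → Ω → ℝ,
      (∀ j ∈ A, ∀ s, 1 ≤ s → s ≤ T → Measurable[F (s - 1)] (H j s)) ∧
      g = fun ω => ∑ j ∈ A, ∑ s ∈ Finset.Icc 1 T, H j s ω * (X j s ω - X j (s - 1) ω) }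

/-- No collective arbitrage for the gains sets `K` and the exchange set `Y`:
`(K₁ × ⋯ × K_N + Y) ∩ L⁰₊ = {0}`. -/
def NCA {N : ℕ} [MeasurableSpace Ω] (P : Measure Ω)
    (K : Fin N → Set (Ω → ℝ)) (Y : Set (Fin N → Ω → ℝ)) : Prop :=
  ∀ k : Fin N → Ω → ℝ, ∀ y ∈ Y, (∀ i, k i ∈ K i) →
    (∀ i, ∀ᵐ ω ∂P, 0 ≤ k i ω + y i ω) →
    ∀ i, (fun ω => k i ω + y i ω) =ᵐ[P] fun _ => (0 : ℝ)

/-- `K^𝒴 = ⨉ᵢ (Kᵢ − L⁰₊(ℱᵢ_T)) + 𝒴`. -/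
def KY {N : ℕ} [MeasurableSpace Ω] (P : Measure Ω)
    (FT : Fin N → MeasurableSpace Ω)
    (K : Fin N → Set (Ω → ℝ)) (Y : Set (Fin N → Ω → ℝ)) : Set (Fin N → Ω → ℝ) :=
  { f | ∃ (k l y : Fin N → Ω → ℝ), y ∈ Y ∧ (∀ i, k i ∈ K i) ∧
      (∀ i, Measurable[FT i] (l i) ∧ (∀ᵐ ω ∂P, 0 ≤ l i ω)) ∧
      ∀ i, f i = fun ω => k i ω - l i ω + y i ω }

/-- `ℝ^N_0`: zero-sum deterministic exchanges, viewed as constant random vectors. -/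
def zeroSum (Ω : Type*) (N : ℕ) : Set (Fin N → Ω → ℝ) :=
  { y | ∃ x : Fin N → ℝ, (∑ i, x i) = 0 ∧ ∀ i, y i = fun _ => x i }

/-- `span(ℝ^N_0, Y_1, …, Y_R)`: the finite-dimensional space of exchanges generated
by `ℝ^N_0` and the random vectors `Ys 1, …, Ys R`. -/
def spanExch {N R : ℕ} (Ys : Fin R → Fin N → Ω → ℝ) : Set (Fin N → Ω → ℝ) :=
  { y | ∃ (x : Fin N → ℝ) (c : Fin R → ℝ), (∑ i, x i) = 0 ∧
      ∀ i, y i = fun ω => x i + ∑ r, c r * Ys r i ω }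

/-- `span(𝒴₀ ∪ {g})` for a vector subspace `𝒴₀`. -/
def spanWith {N : ℕ} (Y0 : Set (Fin N → Ω → ℝ)) (g : Fin N → Ω → ℝ) :
    Set (Fin N → Ω → ℝ) :=
  { y | ∃ w ∈ Y0, ∃ c : ℝ, ∀ i, y i = fun ω => w i ω + c * g i ω }

/-- Equivalent martingale measures `Mᵢₑ` for the assets in `A`, w.r.t. the filtration `F`. -/
def martMeasures {J : ℕ} [MeasurableSpace Ω] (P : Measure Ω)
    (F : ℕ → MeasurableSpace Ω) (T : ℕ) (A : Finset (Fin J))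
    (X : Fin J → ℕ → Ω → ℝ) : Set (Measure Ω) :=
  { Q | IsProbabilityMeasure Q ∧ Q ≪ P ∧ P ≪ Q ∧
      ∀ j ∈ A, (∀ t, t ≤ T → Integrable (X j t) Q) ∧
        ∀ s t, s ≤ t → t ≤ T → X j s =ᵐ[Q] Q[X j t | F s] }

/-- Equivalent collective martingale measures `ℳₑ(𝒴)`. -/
def MeY {J N : ℕ} [MeasurableSpace Ω] (P : Measure Ω)
    (F : Fin N → ℕ → MeasurableSpace Ω) (T : ℕ) (assets : Fin N → Finset (Fin J))
    (X : Fin J → ℕ → Ω → ℝ) (Y : Set (Fin N → Ω → ℝ)) : Set (Fin N → Measure Ω) :=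
  { Q | (∀ i, Q i ∈ martMeasures P (F i) T (assets i) X) ∧
      (∀ y ∈ Y, ∀ i, Integrable (y i) (Q i)) ∧
      ∀ y ∈ Y, (∑ i, ∫ ω, y i ω ∂(Q i)) ≤ 0 }

/-- `ℳ^φ_e(𝒴) = {Q ∈ ℳₑ(𝒴) : E_{Qⁱ}[|φⁱ|] < ∞ ∀ i}`. -/
def MeYphi {J N : ℕ} [MeasurableSpace Ω] (P : Measure Ω)
    (F : Fin N → ℕ → MeasurableSpace Ω) (T : ℕ) (assets : Fin N → Finset (Fin J))
    (X : Fin J → ℕ → Ω → ℝ) (Y : Set (Fin N → Ω → ℝ))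
    (φ : Fin N → Ω → ℝ) : Set (Fin N → Measure Ω) :=
  { Q | Q ∈ MeY P F T assets X Y ∧ ∀ i, Integrable (φ i) (Q i) }

/-- Closedness of a set of random vectors under componentwise `P`-a.s. convergence
of sequences (within `L⁰(Ω, 𝐅_T, P)`). -/
def ClosedAS {N : ℕ} [MeasurableSpace Ω] (P : Measure Ω)
    (FT : Fin N → MeasurableSpace Ω) (S : Set (Fin N → Ω → ℝ)) : Prop :=
  ∀ (f : ℕ → Fin N → Ω → ℝ) (g : Fin N → Ω → ℝ),
    (∀ n, f n ∈ S) → (∀ i, Measurable[FT i] (g i)) →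
    (∀ i, ∀ᵐ ω ∂P, Tendsto (fun n => f n i ω) atTop (𝓝 (g i ω))) →
    g ∈ S

/-- Collective superhedging price `ρ^𝒴₊(f)` (with `inf ∅ = +∞`). -/
noncomputable def rhoPlus {N : ℕ} [MeasurableSpace Ω] (P : Measure Ω)
    (K : Fin N → Set (Ω → ℝ)) (Y : Set (Fin N → Ω → ℝ))
    (f : Fin N → Ω → ℝ) : EReal :=
  sInf { z : EReal | ∃ m : Fin N → ℝ, z = ((∑ i, m i : ℝ) : EReal) ∧
      ∃ k : Fin N → Ω → ℝ, (∀ i, k i ∈ K i) ∧ ∃ y ∈ Y,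
        ∀ i, ∀ᵐ ω ∂P, f i ω ≤ m i + k i ω + y i ω }

/-- Collective subhedging price `ρ^𝒴₋(f)` (with `sup ∅ = −∞`). -/
noncomputable def rhoMinus {N : ℕ} [MeasurableSpace Ω] (P : Measure Ω)
    (K : Fin N → Set (Ω → ℝ)) (Y : Set (Fin N → Ω → ℝ))
    (f : Fin N → Ω → ℝ) : EReal :=
  sSup { z : EReal | ∃ m : Fin N → ℝ, z = ((∑ i, m i : ℝ) : EReal) ∧
      ∃ k : Fin N → Ω → ℝ, (∀ i, k i ∈ K i) ∧ ∃ y ∈ Y,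
        ∀ i, ∀ᵐ ω ∂P, m i + k i ω - y i ω ≤ f i ω }

/-- `ρ^𝒴₊(f)` is attained. -/
def rhoPlusAttained {N : ℕ} [MeasurableSpace Ω] (P : Measure Ω)
    (K : Fin N → Set (Ω → ℝ)) (Y : Set (Fin N → Ω → ℝ))
    (f : Fin N → Ω → ℝ) : Prop :=
  ∃ (m : Fin N → ℝ) (k y : Fin N → Ω → ℝ), y ∈ Y ∧ (∀ i, k i ∈ K i) ∧
    (∀ i, ∀ᵐ ω ∂P, f i ω ≤ m i + k i ω + y i ω) ∧
    rhoPlus P K Y f = ((∑ i, m i : ℝ) : EReal)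

/-- `ρ^𝒴₋(f)` is attained. -/
def rhoMinusAttained {N : ℕ} [MeasurableSpace Ω] (P : Measure Ω)
    (K : Fin N → Set (Ω → ℝ)) (Y : Set (Fin N → Ω → ℝ))
    (f : Fin N → Ω → ℝ) : Prop :=
  ∃ (m : Fin N → ℝ) (k y : Fin N → Ω → ℝ), y ∈ Y ∧ (∀ i, k i ∈ K i) ∧
    (∀ i, ∀ᵐ ω ∂P, m i + k i ω - y i ω ≤ f i ω) ∧
    rhoMinus P K Y f = ((∑ i, m i : ℝ) : EReal)

/-- `f` is `𝒴`-collectively replicable: `f ∈ ℝ^N + (K₁ × ⋯ × K_N) + 𝒴` in `L⁰`. -/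
def Replicable {N : ℕ} [MeasurableSpace Ω] (P : Measure Ω)
    (K : Fin N → Set (Ω → ℝ)) (Y : Set (Fin N → Ω → ℝ))
    (f : Fin N → Ω → ℝ) : Prop :=
  ∃ (m : Fin N → ℝ) (k y : Fin N → Ω → ℝ), y ∈ Y ∧ (∀ i, k i ∈ K i) ∧
    ∀ i, f i =ᵐ[P] fun ω => m i + k i ω + y i ω


/-- Terminal gains of predictable strategies in the extended market consisting of the
assets in `A` together with one additional asset `Z`. -/
def extGainsSet {J : ℕ} (F : ℕ → MeasurableSpace Ω) (T : ℕ)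
    (A : Finset (Fin J)) (X : Fin J → ℕ → Ω → ℝ) (Z : ℕ → Ω → ℝ) : Set (Ω → ℝ) :=
  { g | ∃ (H : Fin J → ℕ → Ω → ℝ) (G : ℕ → Ω → ℝ),
      (∀ j ∈ A, ∀ s, 1 ≤ s → s ≤ T → Measurable[F (s - 1)] (H j s)) ∧
      (∀ s, 1 ≤ s → s ≤ T → Measurable[F (s - 1)] (G s)) ∧
      g = fun ω => (∑ j ∈ A, ∑ s ∈ Finset.Icc 1 T, H j s ω * (X j s ω - X j (s - 1) ω))
        + ∑ s ∈ Finset.Icc 1 T, G s ω * (Z s ω - Z (s - 1) ω) }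

/-- `π ∈ ℝ^N` is an NCA(𝒴)-price for the claims `f = (f¹,…,f^N)`: there are
`𝔽ⁱ`-adapted processes `Zⁱ` (the new assets `X^{J+i}`) with `Zⁱ_0 = πⁱ`, `Zⁱ_T = fⁱ`,
such that NCA(𝒴) holds in the extended market where agent `i` trades the assets in
`(i) ∪ {J+i}`. -/
def IsNCAPrice {J N : ℕ} [MeasurableSpace Ω] (P : Measure Ω)
    (F : Fin N → ℕ → MeasurableSpace Ω) (T : ℕ) (assets : Fin N → Finset (Fin J))
    (X : Fin J → ℕ → Ω → ℝ) (Y : Set (Fin N → Ω → ℝ))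
    (f : Fin N → Ω → ℝ) (pi : Fin N → ℝ) : Prop :=
  ∃ Z : Fin N → ℕ → Ω → ℝ,
    (∀ i t, t ≤ T → Measurable[F i t] (Z i t)) ∧
    (∀ i, Z i 0 =ᵐ[P] fun _ => pi i) ∧
    (∀ i, Z i T =ᵐ[P] f i) ∧
    NCA P (fun i => extGainsSet (F i) T (assets i) X (Z i)) Y

/-- Every almost sure limit of functions dominated by elements of `V` is dominated by an
element of `V`; for a linear space `V` this says that `V - L⁰₊` is closed. -/
def DominatedClosed [MeasurableSpace Ω] (μ : Measure Ω) (V : Set (Ω → ℝ)) : Prop :=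
  ∀ (k f : ℕ → Ω → ℝ) (g : Ω → ℝ), (∀ n, k n ∈ V) → (∀ n, f n ≤ᵐ[μ] k n) →
    (∀ᵐ ω ∂μ, Tendsto (fun n => f n ω) atTop (𝓝 (g ω))) → ∃ k₀ ∈ V, g ≤ᵐ[μ] k₀

/-- The only almost surely nonnegative element of `V` is zero. -/
def NoArb [MeasurableSpace Ω] (μ : Measure Ω) (V : Set (Ω → ℝ)) : Prop :=
  ∀ k ∈ V, (∀ᵐ ω ∂μ, 0 ≤ k ω) → ∀ᵐ ω ∂μ, k ω = 0

/-- `V` is a module over the `m`-measurable functions, closed under countable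
`m`-measurable pasting. -/
structure MeasStable (m : MeasurableSpace Ω) (V : Set (Ω → ℝ)) : Prop where
  add : ∀ k ∈ V, ∀ l ∈ V, (fun ω => k ω + l ω) ∈ V
  mul : ∀ h : Ω → ℝ, Measurable[m] h → ∀ k ∈ V, (fun ω => h ω * k ω) ∈ V
  paste : ∀ k : ℕ → Ω → ℝ, (∀ n, k n ∈ V) → ∀ σ : Ω → ℕ, Measurable[m] σ →
    (fun ω => k (σ ω) ω) ∈ V

/-- `V` enlarged by the `m`-measurable multiples of `ξ`. -/
def adjoinMultiples (m : MeasurableSpace Ω) (ξ : Ω → ℝ) (V : Set (Ω → ℝ)) : Set (Ω → ℝ) :=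
  { k | ∃ h : Ω → ℝ, Measurable[m] h ∧ ∃ v ∈ V, k = fun ω => h ω * ξ ω + v ω }

lemma measurable_paste {m : MeasurableSpace Ω} {h : ℕ → Ω → ℝ} (hh : ∀ n, Measurable (h n))
    {σ : Ω → ℕ} (hσ : Measurable σ) : Measurable fun ω => h (σ ω) ω := by
  have h1 : Measurable (Function.uncurry h) := measurable_from_prod_countable_right hh
  exact h1.comp (hσ.prodMk measurable_id)

/-- A uniformly bounded sequence of measurable functions converges along a measurable
random subsequence. -/
lemma exists_measurable_subseq {m : MeasurableSpace Ω} (u : ℕ → Ω → ℝ)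
    (hu : ∀ n, Measurable (u n)) (hb : ∀ n ω, |u n ω| ≤ 1) :
    ∃ (σ : ℕ → Ω → ℕ) (L : Ω → ℝ), (∀ n, Measurable (σ n)) ∧ Measurable L ∧
      (∀ n ω, n ≤ σ n ω) ∧ ∀ ω, Tendsto (fun n => u (σ n ω) ω) atTop (𝓝 (L ω)) := by
  set L : Ω → ℝ := fun ω => limsup (fun n => u n ω) atTop with hL
  have hLm : Measurable L := Measurable.limsup hu
  have hbdd : ∀ ω, IsBoundedUnder (· ≤ ·) atTop (fun n => u n ω) := fun ω =>
    isBoundedUnder_of ⟨1, fun n => (abs_le.1 (hb n ω)).2⟩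
  have hcob : ∀ ω, IsCoboundedUnder (· ≤ ·) atTop (fun n => u n ω) := fun ω =>
    IsBoundedUnder.isCoboundedUnder_le (isBoundedUnder_of ⟨-1, fun n => (abs_le.1 (hb n ω)).1⟩)
  have hex : ∀ n ω, ∃ k, n ≤ k ∧ |u k ω - L ω| < 1 / ((n : ℝ) + 1) := by
    intro n ω
    have hpos : (0 : ℝ) < 1 / ((n : ℝ) + 1) := by positivity
    have h1 : ∃ᶠ k in atTop, L ω - 1 / ((n : ℝ) + 1) < u k ω :=
      frequently_lt_of_lt_limsup (hcob ω) (by simp only [hL]; linarith)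
    have h2 : ∀ᶠ k in atTop, u k ω < L ω + 1 / ((n : ℝ) + 1) :=
      eventually_lt_of_limsup_lt (by simp only [hL]; linarith) (hbdd ω)
    obtain ⟨k, hk1, hk2, hk3⟩ := (h1.and_eventually (h2.and (eventually_ge_atTop n))).exists
    exact ⟨k, hk3, abs_lt.2 ⟨by linarith, by linarith⟩⟩
  classical
  refine ⟨fun n ω => Nat.find (hex n ω), L, fun n => ?_, hLm, fun n ω => ?_, fun ω => ?_⟩
  · refine measurable_find (hex n) fun k => ?_
    by_cases hk : n ≤ k
    · simp only [hk, true_and]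
      exact measurableSet_lt ((hu k).sub hLm).abs measurable_const
    · simp [hk]
  · exact (Nat.find_spec (hex n ω)).1
  · rw [tendsto_iff_dist_tendsto_zero]
    refine squeeze_zero (fun n => dist_nonneg) (fun n => ?_)
      (tendsto_one_div_add_atTop_nhds_zero_nat (𝕜 := ℝ))
    rw [Real.dist_eq]
    exact (Nat.find_spec (hex n ω)).2.le

/-- Along a measurable random subsequence, a sequence of measurable functions either converges
pointwise to `H`, or explodes (where `e = 1`) with its rescaling by `r` converging to a sign. -/
lemma exists_subseq_tendsto_or_explode {m : MeasurableSpace Ω} (h : ℕ → Ω → ℝ)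
    (hh : ∀ n, Measurable (h n)) :
    ∃ (σ : ℕ → Ω → ℕ) (r : ℕ → Ω → ℝ) (e L H : Ω → ℝ), (∀ n, Measurable (σ n)) ∧
      (∀ n, Measurable (r n)) ∧ Measurable e ∧ Measurable L ∧ Measurable H ∧
      (∀ n ω, n ≤ σ n ω) ∧ (∀ n ω, 0 ≤ r n ω) ∧
      ∀ ω, (e ω = 0 ∧ Tendsto (fun n => h (σ n ω) ω) atTop (𝓝 (H ω))) ∨
        (e ω = 1 ∧ L ω * L ω = 1 ∧ H ω = 0 ∧ Tendsto (fun n => r n ω) atTop (𝓝 0) ∧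
          Tendsto (fun n => r n ω * h (σ n ω) ω) atTop (𝓝 (L ω))) := by
  have hpos : ∀ n ω, 0 < 1 + |h n ω| := fun n ω => by positivity
  obtain ⟨σ, L, hσ, hL, hσn, hlim⟩ := exists_measurable_subseq
    (fun n ω => h n ω / (1 + |h n ω|)) (fun n => (hh n).div ((hh n).abs.const_add 1))
    (fun n ω => by
      rw [abs_div, abs_of_pos (hpos n ω), div_le_one (hpos n ω)]
      linarith)
  set u : ℕ → Ω → ℝ := fun n ω => h (σ n ω) ω / (1 + |h (σ n ω) ω|) with hu
  have hum : ∀ n, Measurable (u n) := fun n =>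
    (measurable_paste hh (hσ n)).div ((measurable_paste hh (hσ n)).abs.const_add 1)
  have hu1 : ∀ n ω, 1 - |u n ω| = (1 + |h (σ n ω) ω|)⁻¹ := by
    intro n ω
    have := hpos (σ n ω) ω
    simp only [hu]
    rw [abs_div, abs_of_pos this]
    field_simp
    ring
  have hub : ∀ n ω, 0 < 1 - |u n ω| := fun n ω => by
    rw [hu1]
    exact inv_pos.2 (hpos _ _)
  have huh : ∀ n ω, (1 - |u n ω|) * h (σ n ω) ω = u n ω := by
    intro n ω
    rw [hu1]
    simp only [hu]
    rw [div_eq_inv_mul]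
  have hset : MeasurableSet {ω | |L ω| = 1} := hL.abs (measurableSet_singleton 1)
  refine ⟨σ, fun n ω => 1 - |u n ω|, Set.indicator {ω | |L ω| = 1} (fun _ => 1), L,
    fun ω => L ω / (1 - |L ω|), hσ, fun n => (hum n).abs.const_sub 1,
    measurable_const.indicator hset, hL, hL.div (hL.abs.const_sub 1), hσn,
    fun n ω => (hub n ω).le, fun ω => ?_⟩
  by_cases hω : |L ω| = 1
  · refine Or.inr ⟨Set.indicator_of_mem (s := {ω | |L ω| = 1}) hω _, ?_, ?_, ?_, ?_⟩
    · rw [← abs_mul_abs_self, hω, one_mul]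
    · simp [hω]
    · have := (hlim ω).abs.const_sub 1
      rwa [hω, sub_self] at this
    · simp_rw [huh]
      exact hlim ω
  · refine Or.inl ⟨Set.indicator_of_notMem (s := {ω | |L ω| = 1}) hω _, ?_⟩
    have hL1 : 1 - |L ω| ≠ 0 := fun h0 => hω (by linarith)
    refine ((hlim ω).div ((hlim ω).abs.const_sub 1) hL1).congr fun n => ?_
    change u n ω / (1 - |u n ω|) = _
    rw [div_eq_iff (hub n ω).ne', mul_comm]
    exact (huh n ω).symm

lemma DominatedClosed.adjoinMultiples {m : MeasurableSpace Ω} [MeasurableSpace Ω]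
    {μ : Measure Ω} {ξ : Ω → ℝ} {V : Set (Ω → ℝ)} (hc : DominatedClosed μ V)
    (hV : MeasStable m V) (hNA : NoArb μ (adjoinMultiples m ξ V)) :
    DominatedClosed μ (adjoinMultiples m ξ V) := by
  intro k f g hk hf hg
  choose h hh v hv hkeq using hk
  obtain ⟨σ, r, e, L, H, hσ, hr, he, hL, hH, hσn, hr0, hlim⟩ :=
    exists_subseq_tendsto_or_explode h hh
  set h' : ℕ → Ω → ℝ := fun n ω => h (σ n ω) ω
  set v' : ℕ → Ω → ℝ := fun n ω => v (σ n ω) ω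
  set f' : ℕ → Ω → ℝ := fun n ω => f (σ n ω) ω
  have hh' : ∀ n, Measurable[m] (h' n) := fun n => measurable_paste hh (hσ n)
  have hv' : ∀ n, v' n ∈ V := fun n => hV.paste v hv (σ n) (hσ n)
  have hle : ∀ᵐ ω ∂μ, ∀ n, f' n ω ≤ h' n ω * ξ ω + v' n ω := by
    filter_upwards [ae_all_iff.2 hf] with ω hω n
    have := hω (σ n ω)
    rwa [hkeq] at this
  have hg' : ∀ᵐ ω ∂μ, Tendsto (fun n => f' n ω) atTop (𝓝 (g ω)) := by
    filter_upwards [hg] with ω hω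
    exact hω.comp (tendsto_atTop_mono (fun n => hσn n ω) tendsto_id)
  have he_nonneg : ∀ ω, 0 ≤ e ω := fun ω => by
    rcases hlim ω with h0 | h1
    · exact h0.1.ge
    · rw [h1.1]
      exact zero_le_one
  -- where the coefficients explode, `ξ` is redundant
  obtain ⟨k₀, hk₀, hk₀le⟩ := hc (fun n ω => e ω * r n ω * v' n ω)
    (fun n ω => e ω * (r n ω * f' n ω - r n ω * h' n ω * ξ ω))
    (fun ω => -(e ω * L ω * ξ ω))
    (fun n => hV.mul _ (he.mul (hr n)) _ (hv' n))
    (fun n => by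
      filter_upwards [hle] with ω hω
      have h1 := mul_le_mul_of_nonneg_left (hω n) (mul_nonneg (he_nonneg ω) (hr0 n ω))
      linarith)
    (by
      filter_upwards [hg'] with ω hω
      rcases hlim ω with ⟨h0, -⟩ | ⟨h1, -, -, h2, h3⟩
      · simp [h0]
      · have h4 := ((h2.mul hω).sub (h3.mul_const (ξ ω))).const_mul (e ω)
        convert h4 using 2
        ring)
  have hred : ∀ᵐ ω ∂μ, e ω * L ω * ξ ω + k₀ ω = 0 := by
    refine hNA _ ⟨fun ω => e ω * L ω, he.mul hL, k₀, hk₀, rfl⟩ ?_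
    filter_upwards [hk₀le] with ω hω
    linarith
  have heξ : ∀ᵐ ω ∂μ, e ω * ξ ω = -(e ω * L ω * k₀ ω) := by
    filter_upwards [hred] with ω hω
    rcases hlim ω with ⟨h0, -⟩ | ⟨h1, h2, -⟩
    · simp [h0]
    · rw [h1] at hω ⊢
      linear_combination (-ξ ω) * h2 + L ω * hω
  obtain ⟨k₁, hk₁, hk₁le⟩ := hc (fun n ω => -(h' n ω * e ω * L ω) * k₀ ω + v' n ω)
    (fun n ω => f' n ω - (1 - e ω) * h' n ω * ξ ω)
    (fun ω => g ω - H ω * ξ ω)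
    (fun n => hV.add _ (hV.mul _ (((hh' n).mul he).mul hL).neg _ hk₀) _ (hv' n))
    (fun n => by
      filter_upwards [hle, heξ] with ω hω hω'
      have h1 := hω n
      have h2 : h' n ω * (e ω * ξ ω) = -(h' n ω * e ω * L ω) * k₀ ω := by rw [hω']; ring
      linarith)
    (by
      filter_upwards [hg'] with ω hω
      rcases hlim ω with ⟨h0, h1⟩ | ⟨h1, -, h2, -⟩
      · simpa [h0] using hω.sub (h1.mul_const (ξ ω))
      · simpa [h1, h2] using hω)
  refine ⟨_, ⟨H, hH, k₁, hk₁, rfl⟩, ?_⟩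
  filter_upwards [hk₁le] with ω hω
  linarith

/-- The sums `∑ a ∈ s, h a * ξ a` with `h a` measurable for `m a`. -/
def predictableSpan {ι : Type*} (m : ι → MeasurableSpace Ω) (ξ : ι → Ω → ℝ) (s : Finset ι) :
    Set (Ω → ℝ) :=
  { k | ∃ h : ι → Ω → ℝ, (∀ a ∈ s, Measurable[m a] (h a)) ∧
      k = fun ω => ∑ a ∈ s, h a ω * ξ a ω }

lemma measStable_predictableSpan {ι : Type*} {m : ι → MeasurableSpace Ω} (ξ : ι → Ω → ℝ)
    {s : Finset ι} {m' : MeasurableSpace Ω} (hm : ∀ a ∈ s, m' ≤ m a) :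
    MeasStable m' (predictableSpan m ξ s) where
  add := by
    rintro _ ⟨h, hh, rfl⟩ _ ⟨h', hh', rfl⟩
    refine ⟨fun a ω => h a ω + h' a ω, fun a ha => (hh a ha).add (hh' a ha), ?_⟩
    funext ω
    simp only [add_mul, Finset.sum_add_distrib]
  mul := by
    rintro g hg _ ⟨h, hh, rfl⟩
    refine ⟨fun a ω => g ω * h a ω, fun a ha => (hg.mono (hm a ha) le_rfl).mul (hh a ha), ?_⟩
    funext ω
    simp only [Finset.mul_sum, mul_assoc]
  paste := by
    intro k hk σ hσ
    choose h hh hkeq using hk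
    refine ⟨fun a ω => h (σ ω) a ω, fun a ha => ?_, ?_⟩
    · exact measurable_paste (h := fun n => h n a) (fun n => hh n a ha)
        (hσ.mono (hm a ha) le_rfl)
    · funext ω
      rw [hkeq]

lemma predictableSpan_insert {ι : Type*} [DecidableEq ι] (m : ι → MeasurableSpace Ω)
    (ξ : ι → Ω → ℝ) {a : ι} {s : Finset ι} (ha : a ∉ s) :
    predictableSpan m ξ (insert a s) = adjoinMultiples (m a) (ξ a) (predictableSpan m ξ s) := by
  ext k
  constructor
  · rintro ⟨h, hh, rfl⟩
    refine ⟨h a, hh a (Finset.mem_insert_self a s), _,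
      ⟨h, fun b hb => hh b (Finset.mem_insert_of_mem hb), rfl⟩, ?_⟩
    funext ω
    rw [Finset.sum_insert ha]
  · rintro ⟨g, hg, _, ⟨h, hh, rfl⟩, rfl⟩
    refine ⟨Function.update h a g, fun b hb => ?_, ?_⟩
    · by_cases hba : b = a
      · subst hba
        simpa using hg
      · rw [Function.update_of_ne hba]
        exact hh b (Finset.mem_of_mem_insert_of_ne hb hba)
    · funext ω
      rw [Finset.sum_insert ha, Function.update_self]
      congr 1
      refine Finset.sum_congr rfl fun b hb => ?_
      rw [Function.update_of_ne (fun hba : b = a => ha (hba ▸ hb))]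

/-- Absence of arbitrage implies closedness, for finitely many increments with coefficients
measurable with respect to increasing `σ`-algebras. No adaptedness is needed. -/
theorem dominatedClosed_predictableSpan {ι : Type*} [MeasurableSpace Ω] {μ : Measure Ω}
    (𝒢 : ℕ → MeasurableSpace Ω) (h𝒢 : Monotone 𝒢) (τ : ι → ℕ) (ξ : ι → Ω → ℝ) (s : Finset ι)
    (hNA : NoArb μ (predictableSpan (fun a => 𝒢 (τ a)) ξ s)) :
    DominatedClosed μ (predictableSpan (fun a => 𝒢 (τ a)) ξ s) := by
  classical
  revert hNA
  refine Finset.induction_on_min_value τ s ?_ ?_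
  · intro _ k f g hk hf hg
    refine ⟨_, ⟨fun _ _ => 0, by simp, rfl⟩, ?_⟩
    filter_upwards [ae_all_iff.2 hf, hg] with ω hω hgω
    refine le_of_tendsto hgω (Eventually.of_forall fun n => (hω n).trans ?_)
    obtain ⟨h, -, hkn⟩ := hk n
    rw [hkn]
    simp
  · intro a s ha hmin ih hNA
    rw [predictableSpan_insert _ _ ha] at hNA ⊢
    refine (ih fun k hk => hNA k ?_).adjoinMultiples
      (measStable_predictableSpan ξ fun b hb => h𝒢 (hmin b hb)) hNA
    exact ⟨fun _ => 0, measurable_const, k, hk, by simp⟩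

/-- The square integrable classes dominated by an element of `V`. -/
def dominatedLp [MeasurableSpace Ω] (μ : Measure Ω) (V : Set (Ω → ℝ)) : Set (Lp ℝ 2 μ) :=
  { c | ∃ k ∈ V, (c : Ω → ℝ) ≤ᵐ[μ] k }

lemma DominatedClosed.isClosed_dominatedLp [MeasurableSpace Ω] {μ : Measure Ω}
    {V : Set (Ω → ℝ)} (hc : DominatedClosed μ V) : IsClosed (dominatedLp μ V) := by
  refine IsSeqClosed.isClosed fun c c₀ hcV hlim => ?_
  obtain ⟨ns, -, hns⟩ := (tendstoInMeasure_of_tendsto_Lp hlim).exists_seq_tendsto_ae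
  choose k hk hck using hcV
  exact hc (fun n => k (ns n)) (fun n => c (ns n)) c₀ (fun n => hk _) (fun n => hck _) hns

lemma smul_mem_dominatedLp [MeasurableSpace Ω] {μ : Measure Ω} {V : Set (Ω → ℝ)}
    (hsmul : ∀ a : ℝ, ∀ k ∈ V, (fun ω => a * k ω) ∈ V) {a : ℝ} (ha : 0 ≤ a)
    {c : Lp ℝ 2 μ} (hcV : c ∈ dominatedLp μ V) : a • c ∈ dominatedLp μ V := by
  obtain ⟨k, hk, hck⟩ := hcV
  refine ⟨_, hsmul a k hk, ?_⟩
  filter_upwards [hck, Lp.coeFn_smul a c] with ω h1 h2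
  rw [h2]
  exact mul_le_mul_of_nonneg_left h1 ha

lemma convex_dominatedLp [MeasurableSpace Ω] {μ : Measure Ω} {V : Set (Ω → ℝ)}
    (hadd : ∀ k ∈ V, ∀ l ∈ V, (fun ω => k ω + l ω) ∈ V)
    (hsmul : ∀ a : ℝ, ∀ k ∈ V, (fun ω => a * k ω) ∈ V) : Convex ℝ (dominatedLp μ V) := by
  intro c hcV d hdV a b ha hb _
  obtain ⟨k, hk, hck⟩ := smul_mem_dominatedLp hsmul ha hcV
  obtain ⟨l, hl, hdl⟩ := smul_mem_dominatedLp hsmul hb hdV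
  refine ⟨_, hadd k hk l hl, ?_⟩
  filter_upwards [hck, hdl, Lp.coeFn_add (a • c) (b • d)] with ω h1 h2 h3
  rw [h3]
  exact add_le_add h1 h2

/-- A non-null set is separated from the square integrable functions dominated by `V`. -/
lemma exists_separating_Lp [MeasurableSpace Ω] {μ : Measure Ω} [IsFiniteMeasure μ]
    {V : Set (Ω → ℝ)}
    (hadd : ∀ k ∈ V, ∀ l ∈ V, (fun ω => k ω + l ω) ∈ V)
    (hsmul : ∀ a : ℝ, ∀ k ∈ V, (fun ω => a * k ω) ∈ V) (hne : V.Nonempty)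
    (hc : DominatedClosed μ V) (hNA : NoArb μ V)
    {A : Set Ω} (hA : MeasurableSet A) (hμA : μ A ≠ 0) :
    ∃ z : Lp ℝ 2 μ, (∀ c ∈ dominatedLp μ V, inner ℝ z c ≤ 0) ∧ 0 < ∫ ω in A, z ω ∂μ := by
  have hnot : indicatorConstLp 2 hA (measure_ne_top μ A) (1 : ℝ) ∉ dominatedLp μ V := by
    rintro ⟨k, hk, hAk⟩
    have h1 : ∀ᵐ ω ∂μ, k ω = 0 := by
      refine hNA k hk ?_
      filter_upwards [hAk, indicatorConstLp_coeFn (p := 2) (hs := hA)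
        (hμs := measure_ne_top μ A) (c := (1 : ℝ))] with ω h1 h2
      rw [h2] at h1
      exact (Set.indicator_nonneg (fun _ _ => zero_le_one) ω).trans h1
    refine hμA (measure_mono_null (t := {ω | ¬ ω ∉ A}) (fun ω hω => not_not.2 hω)
      (ae_iff.1 (?_ : ∀ᵐ ω ∂μ, ω ∉ A)))
    filter_upwards [h1, hAk, indicatorConstLp_coeFn (p := 2) (hs := hA)
      (hμs := measure_ne_top μ A) (c := (1 : ℝ))] with ω h1 h2 h3 hω
    rw [h3, h1, Set.indicator_of_mem hω] at h2
    linarith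
  obtain ⟨φ, b, hφ, hb⟩ := geometric_hahn_banach_closed_point
    (convex_dominatedLp hadd hsmul) hc.isClosed_dominatedLp hnot
  have hcone : ∀ c ∈ dominatedLp μ V, φ c ≤ 0 := by
    intro c hcV
    by_contra! hpos
    have hbpos : 0 < b := hpos.trans (hφ c hcV)
    have h1 := hφ _ (smul_mem_dominatedLp hsmul (div_pos hbpos hpos).le hcV)
    rw [map_smul, smul_eq_mul, div_mul_cancel₀ _ hpos.ne'] at h1
    exact lt_irrefl _ h1
  have hb0 : 0 < b := by
    obtain ⟨k, hk⟩ := hne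
    have h0 : (0 : Lp ℝ 2 μ) ∈ dominatedLp μ V := by
      refine ⟨_, hsmul 0 k hk, ?_⟩
      filter_upwards [Lp.coeFn_zero ℝ 2 μ] with ω hω
      rw [hω]
      simp
    simpa using hφ 0 h0
  refine ⟨(InnerProductSpace.toDual ℝ _).symm φ, fun c hcV => ?_, ?_⟩
  · rw [InnerProductSpace.toDual_symm_apply]
    exact hcone c hcV
  · rw [← L2.inner_indicatorConstLp_one (𝕜 := ℝ) hA (measure_ne_top μ A), real_inner_comm,
      InnerProductSpace.toDual_symm_apply]
    exact hb0.trans hb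

lemma nonneg_of_separating [MeasurableSpace Ω] {μ : Measure Ω} [IsFiniteMeasure μ]
    {V : Set (Ω → ℝ)} (hzero : (fun _ => 0) ∈ V) {z : Lp ℝ 2 μ}
    (hz : ∀ c ∈ dominatedLp μ V, inner ℝ z c ≤ 0) : 0 ≤ z := by
  rw [← Lp.coeFn_nonneg]
  refine ae_nonneg_of_forall_setIntegral_nonneg
    ((Lp.memLp z).integrable one_le_two) fun s hs hμs => ?_
  have h1 : -indicatorConstLp 2 hs hμs.ne (1 : ℝ) ∈ dominatedLp μ V := by
    refine ⟨_, hzero, ?_⟩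
    filter_upwards [Lp.coeFn_neg (indicatorConstLp 2 hs hμs.ne (1 : ℝ)),
      indicatorConstLp_coeFn (p := 2) (hs := hs) (hμs := hμs.ne) (c := (1 : ℝ))] with ω h1 h2
    rw [h1, Pi.neg_apply, h2]
    exact neg_nonpos.2 (Set.indicator_nonneg (fun _ _ => zero_le_one) ω)
  have h2 := hz _ h1
  rw [inner_neg_right, real_inner_comm, L2.inner_indicatorConstLp_one] at h2
  linarith

/-- Kreps-Yan: if `V - L⁰₊` is closed and contains no nontrivial nonnegative function,
there is a strictly positive density integrating the elements of `V` to nonpositive values. -/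
theorem exists_pos_density [MeasurableSpace Ω] {μ : Measure Ω} [IsFiniteMeasure μ]
    {V : Set (Ω → ℝ)}
    (hadd : ∀ k ∈ V, ∀ l ∈ V, (fun ω => k ω + l ω) ∈ V)
    (hsmul : ∀ a : ℝ, ∀ k ∈ V, (fun ω => a * k ω) ∈ V) (hne : V.Nonempty)
    (hc : DominatedClosed μ V) (hNA : NoArb μ V) :
    ∃ z : Ω → ℝ, Measurable z ∧ (∀ ω, 0 < z ω) ∧ Integrable z μ ∧
      ∀ c ∈ V, MemLp c 2 μ → ∫ ω, z ω * c ω ∂μ ≤ 0 := by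
  have hzero : (fun _ => 0) ∈ V := by
    obtain ⟨k, hk⟩ := hne
    simpa using hsmul 0 k hk
  set Z : Set (Lp ℝ 2 μ) := {z | ∀ c ∈ dominatedLp μ V, inner ℝ z c ≤ 0} with hZ
  have hZpos : ∀ z ∈ Z, 0 ≤ z := fun z hz => nonneg_of_separating hzero hz
  set p : Lp ℝ 2 μ → ℝ := fun z => μ.real {ω | 0 < z ω} with hp
  have hpm : ∀ z : Lp ℝ 2 μ, MeasurableSet {ω | 0 < z ω} := fun z =>
    measurableSet_lt measurable_const (Lp.stronglyMeasurable z).measurable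
  have hbdd : BddAbove (p '' Z) := by
    refine ⟨μ.real Set.univ, ?_⟩
    rintro _ ⟨z, -, rfl⟩
    exact measureReal_mono (Set.subset_univ _)
  have hZ0 : (0 : Lp ℝ 2 μ) ∈ Z := fun c _ => by rw [inner_zero_left]
  obtain ⟨u, -, hu, huZ⟩ := exists_seq_tendsto_sSup (⟨_, 0, hZ0, rfl⟩ : (p '' Z).Nonempty) hbdd
  choose y hyZ hyu using huZ
  set a : ℕ → ℝ := fun n => (1 / 2) ^ n / (1 + ‖y n‖) with ha
  have hapos : ∀ n, 0 < a n := fun n => by positivity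
  have hsum : Summable fun n => a n • y n := by
    refine Summable.of_norm_bounded (g := fun n : ℕ => (1 / 2 : ℝ) ^ n)
      (summable_geometric_of_lt_one (by norm_num) (by norm_num)) fun n => ?_
    rw [norm_smul, Real.norm_of_nonneg (hapos n).le, ha, div_mul_eq_mul_div]
    refine div_le_of_le_mul₀ (by positivity) (by positivity) ?_
    gcongr
    linarith
  set z : Lp ℝ 2 μ := ∑' n, a n • y n with hz
  have hzZ : z ∈ Z := by
    intro c hcV
    have h1 : HasSum (fun n => inner ℝ c (a n • y n)) (inner ℝ c z) :=
      hsum.hasSum.mapL (innerSL ℝ c)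
    rw [real_inner_comm]
    refine h1.nonpos fun n => ?_
    rw [inner_smul_right, real_inner_comm]
    exact mul_nonpos_of_nonneg_of_nonpos (hapos n).le (hyZ n c hcV)
  have hyz : ∀ n, a n • y n ≤ z := fun n =>
    hsum.le_tsum n fun j _ => by
      rw [← Lp.coeFn_nonneg]
      filter_upwards [(Lp.coeFn_nonneg (y j)).2 (hZpos _ (hyZ j)), Lp.coeFn_smul (a j) (y j)]
        with ω h1 h2
      rw [h2]
      exact mul_nonneg (hapos j).le h1
  have hpz : sSup (p '' Z) ≤ p z := by
    refine le_of_tendsto hu (Eventually.of_forall fun n => ?_)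
    rw [← hyu]
    refine ENNReal.toReal_mono (measure_ne_top _ _) (measure_mono_ae ?_)
    filter_upwards [(Lp.coeFn_le _ _).2 (hyz n), Lp.coeFn_smul (a n) (y n)] with ω h1 h2 h3
    rw [h2] at h1
    exact (mul_pos (hapos n) h3).trans_le h1
  have hzpos : ∀ᵐ ω ∂μ, 0 < z ω := by
    by_contra hcon
    obtain ⟨x, hxZ, hx⟩ := exists_separating_Lp hadd hsmul hne hc hNA (hpm z).compl
      (fun h0 => hcon (ae_iff.2 h0))
    have hxz : z + x ∈ Z := fun c hcV => by
      rw [inner_add_left]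
      exact add_nonpos (hzZ c hcV) (hxZ c hcV)
    have hle : p (z + x) ≤ p z := (le_csSup hbdd ⟨_, hxz, rfl⟩).trans hpz
    have hB : MeasurableSet ({ω | 0 < z ω}ᶜ ∩ {ω | 0 < x ω}) := (hpm z).compl.inter (hpm x)
    have h1 : p z + μ.real ({ω | 0 < z ω}ᶜ ∩ {ω | 0 < x ω}) ≤ p (z + x) := by
      rw [hp, ← measureReal_union (Set.disjoint_left.2 fun ω h1 h2 => h2.1 h1) hB]
      refine ENNReal.toReal_mono (measure_ne_top _ _) (measure_mono_ae ?_)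
      filter_upwards [Lp.coeFn_add z x, (Lp.coeFn_nonneg z).2 (hZpos z hzZ),
        (Lp.coeFn_nonneg x).2 (hZpos x hxZ)] with ω h1 h2 h3 h4
      change 0 < (z + x : Lp ℝ 2 μ) ω
      rw [h1]
      rcases h4 with h4 | h4
      · exact add_pos_of_pos_of_nonneg h4 h3
      · exact add_pos_of_nonneg_of_pos h2 h4.2
    have h2 : μ ({ω | 0 < z ω}ᶜ ∩ {ω | 0 < x ω}) = 0 := by
      rw [← measureReal_eq_zero_iff]
      exact le_antisymm (by linarith) measureReal_nonneg
    refine hx.not_ge (setIntegral_nonpos_ae (hpm z).compl ?_)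
    filter_upwards [measure_eq_zero_iff_ae_notMem.1 h2] with ω h3 h4
    by_contra! h5
    exact h3 ⟨h4, h5⟩
  have hzm : Measurable (z : Ω → ℝ) := (Lp.stronglyMeasurable z).measurable
  set z' : Ω → ℝ := fun ω => if 0 < z ω then z ω else 1 with hz'
  have hzz' : (z : Ω → ℝ) =ᵐ[μ] z' := by
    filter_upwards [hzpos] with ω hω
    simp [hz', hω]
  refine ⟨z', Measurable.ite (hpm z) hzm measurable_const, fun ω => ?_,
    ((Lp.memLp z).integrable one_le_two).congr hzz', fun c hcV hcL => ?_⟩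
  · simp only [hz']
    split_ifs with h
    · exact h
    · exact one_pos
  · have h1 := hzZ (hcL.toLp c) ⟨c, hcV, hcL.coeFn_toLp.le⟩
    rw [L2.inner_def] at h1
    refine le_of_eq_of_le (integral_congr_ae ?_) h1
    filter_upwards [hzz', hcL.coeFn_toLp] with ω h2 h3
    rw [h3, ← h2]
    simp [mul_comm]

lemma setIntegral_mul_eq_zero {m m0 : MeasurableSpace Ω} (hm : m ≤ m0) {Q : Measure Ω}
    [IsFiniteMeasure Q] {h ξ : Ω → ℝ} (hh : Measurable[m] h) (hξ : Integrable ξ Q)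
    (hξ0 : Q[ξ | m] =ᵐ[Q] 0) {B : Set Ω} (hB : MeasurableSet[m] B) {c : ℝ}
    (hbd : ∀ ω ∈ B, |h ω| ≤ c) :
    IntegrableOn (fun ω => h ω * ξ ω) B Q ∧ ∫ ω in B, h ω * ξ ω ∂Q = 0 := by
  have hsm : StronglyMeasurable[m] (B.indicator h) := (hh.indicator hB).stronglyMeasurable
  have hbd' : ∀ᵐ ω ∂Q, ‖B.indicator h ω‖ ≤ |c| := Eventually.of_forall fun ω => by
    by_cases hω : ω ∈ B
    · rw [Set.indicator_of_mem hω]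
      exact (hbd ω hω).trans (le_abs_self c)
    · rw [Set.indicator_of_notMem hω, norm_zero]
      exact abs_nonneg c
  have heq : B.indicator (fun ω => h ω * ξ ω) = B.indicator h * ξ := by
    funext ω
    simp only [Pi.mul_apply]
    by_cases hω : ω ∈ B <;> simp [hω]
  have hint : Integrable (B.indicator h * ξ) Q :=
    hξ.bdd_mul (hsm.mono hm).aestronglyMeasurable hbd'
  refine ⟨(integrable_indicator_iff (hm B hB)).1 (heq ▸ hint), ?_⟩
  rw [← integral_indicator (hm B hB), heq, ← integral_condExp hm]
  refine integral_eq_zero_of_ae ?_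
  filter_upwards [condExp_stronglyMeasurable_mul_of_bound hm hsm hξ |c| hbd', hξ0] with ω h1 h2
  rw [h1, Pi.mul_apply, h2]
  simp

lemma measurableSet_abs_le {m : MeasurableSpace Ω} {h : Ω → ℝ} (hh : Measurable h) (c : ℝ) :
    MeasurableSet {ω | |h ω| ≤ c} :=
  measurableSet_le hh.abs measurable_const

/-- One step of a generalized martingale whose next value is bounded below by an integrable
function. -/
lemma integrable_step {A : Type*} [Fintype A] {m m0 : MeasurableSpace Ω} (hm : m ≤ m0)
    {Q : Measure Ω} [IsFiniteMeasure Q] {U : Ω → ℝ} (hU : Measurable[m] U) {H ξ : A → Ω → ℝ}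
    (hH : ∀ a, Measurable[m] (H a)) (hξ : ∀ a, Integrable (ξ a) Q)
    (hξ0 : ∀ a, Q[ξ a | m] =ᵐ[Q] 0) {Y : Ω → ℝ} (hY : Integrable Y Q)
    (hle : ∀ᵐ ω ∂Q, 0 ≤ U ω + ∑ a, H a ω * ξ a ω + Y ω) :
    (∀ᵐ ω ∂Q, 0 ≤ U ω + (Q[Y | m]) ω) ∧
      (Integrable U Q → Integrable (fun ω => U ω + ∑ a, H a ω * ξ a ω) Q ∧
        ∫ ω, U ω + ∑ a, H a ω * ξ a ω ∂Q ≤ ∫ ω, U ω ∂Q) := by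
  set E : ℕ → Set Ω := fun n => {ω | |U ω| ≤ n} ∩ ⋂ a, {ω | |H a ω| ≤ n} with hE
  have hEm : ∀ n, MeasurableSet[m] (E n) := fun n =>
    (measurableSet_abs_le hU n).inter
      (MeasurableSet.iInter fun a => measurableSet_abs_le (hH a) n)
  have hEmem : ∀ ω, ∀ᶠ n in atTop, ω ∈ E n := by
    intro ω
    have h1 : ∀ x : ℝ, ∀ᶠ n : ℕ in atTop, x ≤ n := fun x =>
      tendsto_natCast_atTop_atTop.eventually_ge_atTop x
    filter_upwards [h1 |U ω|, eventually_all.2 fun a => h1 |H a ω|] with n h2 h3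
    exact ⟨h2, Set.mem_iInter.2 h3⟩
  have hYE : Integrable (Q[Y | m]) Q := integrable_condExp
  have hD : ∀ n, ∀ B, MeasurableSet[m] B → B ⊆ E n →
      IntegrableOn (fun ω => U ω + ∑ a, H a ω * ξ a ω + Y ω) B Q ∧ IntegrableOn U B Q ∧
      ∫ ω in B, U ω + ∑ a, H a ω * ξ a ω + Y ω ∂Q = ∫ ω in B, U ω + (Q[Y | m]) ω ∂Q := by
    intro n B hB hBE
    have hUB : IntegrableOn U B Q := by
      refine Measure.integrableOn_of_bounded (M := n) (measure_ne_top Q B)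
        (hU.mono hm le_rfl).aestronglyMeasurable ?_
      filter_upwards [ae_restrict_mem (hm B hB)] with ω hω
      exact (hBE hω).1
    have hHB : ∀ a, _ := fun a => setIntegral_mul_eq_zero hm (hH a) (hξ a) (hξ0 a) hB
      (c := n) (fun ω hω => Set.mem_iInter.1 (hBE hω).2 a)
    have hsum : IntegrableOn (fun ω => ∑ a, H a ω * ξ a ω) B Q :=
      integrable_finsetSum _ fun a _ => (hHB a).1
    have hUsum : IntegrableOn (fun ω => U ω + ∑ a, H a ω * ξ a ω) B Q := hUB.add hsum
    refine ⟨hUsum.add hY.integrableOn, hUB, ?_⟩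
    rw [integral_add hUsum hY.integrableOn, integral_add hUB hsum,
      integral_finsetSum _ fun a _ => (hHB a).1, integral_add hUB hYE.integrableOn,
      setIntegral_condExp hm hY hB]
    simp [(hHB _).2]
  have hpos : ∀ᵐ ω ∂Q, 0 ≤ U ω + (Q[Y | m]) ω := by
    have hmeas : Measurable[m] fun ω => U ω + (Q[Y | m]) ω :=
      hU.add stronglyMeasurable_condExp.measurable
    have hneg : ∀ n, ∀ᵐ ω ∂Q, ω ∈ E n → 0 ≤ U ω + (Q[Y | m]) ω := by
      intro n
      set B : Set Ω := E n ∩ {ω | U ω + (Q[Y | m]) ω < 0} with hBdef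
      have hB : MeasurableSet[m] B := (hEm n).inter (measurableSet_lt hmeas measurable_const)
      obtain ⟨-, hUB, heq⟩ := hD n B hB Set.inter_subset_left
      have h1 : 0 ≤ ∫ ω in B, U ω + (Q[Y | m]) ω ∂Q := by
        rw [← heq]
        exact integral_nonneg_of_ae (ae_restrict_of_ae hle)
      have h2 : 0 ≤ᵐ[Q.restrict B] fun ω => -(U ω + (Q[Y | m]) ω) := by
        filter_upwards [ae_restrict_mem (hm B hB)] with ω hω
        exact neg_nonneg.2 hω.2.le
      have h3 : ∫ ω in B, -(U ω + (Q[Y | m]) ω) ∂Q = 0 := by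
        refine le_antisymm ?_ (integral_nonneg_of_ae h2)
        rw [integral_neg]
        linarith
      have h4 := (integral_eq_zero_iff_of_nonneg_ae h2 (hUB.add hYE.integrableOn).neg).1 h3
      rw [Filter.EventuallyEq, ae_restrict_iff' (hm B hB)] at h4
      filter_upwards [h4] with ω h5 h6
      by_contra! h7
      have := h5 ⟨h6, h7⟩
      simp only [Pi.zero_apply] at this
      linarith
    filter_upwards [ae_all_iff.2 hneg] with ω hω
    obtain ⟨n, hn⟩ := (hEmem ω).exists
    exact hω n hn
  refine ⟨hpos, fun hUint => ?_⟩
  have hcover : AECover Q atTop E :=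
    ⟨Eventually.of_forall hEmem, fun n => hm _ (hEm n)⟩
  have hbound : ∀ n, ∫ ω in E n, U ω + ∑ a, H a ω * ξ a ω + Y ω ∂Q
      ≤ ∫ ω, U ω ∂Q + ∫ ω, Y ω ∂Q := by
    intro n
    rw [(hD n (E n) (hEm n) subset_rfl).2.2, ← integral_condExp hm (f := Y),
      ← integral_add hUint hYE]
    exact setIntegral_le_integral (hUint.add hYE) hpos
  have hint : Integrable (fun ω => U ω + ∑ a, H a ω * ξ a ω + Y ω) Q :=
    hcover.integrable_of_integral_bounded_of_nonneg_ae _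
      (fun n => (hD n (E n) (hEm n) subset_rfl).1) hle (Eventually.of_forall hbound)
  have hlim := le_of_tendsto' (hcover.integral_tendsto_of_countably_generated hint) hbound
  have hint' : Integrable (fun ω => U ω + ∑ a, H a ω * ξ a ω) Q := by
    refine (hint.sub hY).congr (Eventually.of_forall fun ω => ?_)
    simp
  refine ⟨hint', ?_⟩
  rw [integral_add hint' hY] at hlim
  linarith

/-- Terminal gains of predictable strategies trading the assets `S`. -/
def marketGains {A : Type*} [Fintype A] (F : ℕ → MeasurableSpace Ω) (T : ℕ)
    (S : A → ℕ → Ω → ℝ) : Set (Ω → ℝ) :=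
  { g | ∃ H : A → ℕ → Ω → ℝ,
      (∀ a s, 1 ≤ s → s ≤ T → Measurable[F (s - 1)] (H a s)) ∧
      g = fun ω => ∑ a, ∑ s ∈ Finset.Icc 1 T, H a s ω * (S a s ω - S a (s - 1) ω) }

/-- Gains from trading martingales that are bounded below by an integrable function are
integrable with nonpositive expectation. -/
theorem integral_marketGains_nonpos {A : Type*} [Fintype A] [m0 : MeasurableSpace Ω]
    {Q : Measure Ω} [IsFiniteMeasure Q] {F : ℕ → MeasurableSpace Ω} (hFmono : Monotone F)
    (hFle : ∀ t, F t ≤ m0) {T : ℕ} {S : A → ℕ → Ω → ℝ}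
    (hSm : ∀ a t, t ≤ T → Measurable[F t] (S a t))
    (hSint : ∀ a t, t ≤ T → Integrable (S a t) Q)
    (hmart : ∀ a s t, s ≤ t → t ≤ T → S a s =ᵐ[Q] Q[S a t | F s])
    {k Y : Ω → ℝ} (hk : k ∈ marketGains F T S) (hY : Integrable Y Q)
    (hle : ∀ᵐ ω ∂Q, 0 ≤ k ω + Y ω) : Integrable k Q ∧ ∫ ω, k ω ∂Q ≤ 0 := by
  obtain ⟨H, hH, rfl⟩ := hk
  suffices h : ∀ t ≤ T, ∀ Y : Ω → ℝ, Integrable Y Q →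
      (∀ᵐ ω ∂Q, 0 ≤ (∑ a, ∑ s ∈ Finset.Icc 1 t, H a s ω * (S a s ω - S a (s - 1) ω)) + Y ω) →
      Integrable
        (fun ω => ∑ a, ∑ s ∈ Finset.Icc 1 t, H a s ω * (S a s ω - S a (s - 1) ω)) Q ∧
      ∫ ω, ∑ a, ∑ s ∈ Finset.Icc 1 t, H a s ω * (S a s ω - S a (s - 1) ω) ∂Q ≤ 0 from
    h T le_rfl Y hY hle
  intro t
  induction t with
  | zero => simp
  | succ t ih =>
    intro ht Y hY hle
    have hstep : ∀ ω, ∑ a, ∑ s ∈ Finset.Icc 1 (t + 1), H a s ω * (S a s ω - S a (s - 1) ω)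
        = (∑ a, ∑ s ∈ Finset.Icc 1 t, H a s ω * (S a s ω - S a (s - 1) ω))
          + ∑ a, H a (t + 1) ω * (S a (t + 1) ω - S a t ω) := by
      intro ω
      rw [← Finset.sum_add_distrib]
      refine Finset.sum_congr rfl fun a _ => ?_
      rw [Finset.sum_Icc_succ_top (by omega), Nat.add_sub_cancel]
    simp only [hstep] at hle ⊢
    have hU : Measurable[F t]
        fun ω => ∑ a, ∑ s ∈ Finset.Icc 1 t, H a s ω * (S a s ω - S a (s - 1) ω) := by
      refine Finset.measurable_fun_sum _ fun a _ => Finset.measurable_fun_sum _ fun s hs => ?_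
      obtain ⟨hs1, hst⟩ := Finset.mem_Icc.1 hs
      exact ((hH a s hs1 (by omega)).mono (hFmono (by omega)) le_rfl).mul
        (((hSm a s (by omega)).mono (hFmono hst) le_rfl).sub
          ((hSm a (s - 1) (by omega)).mono (hFmono (by omega)) le_rfl))
    obtain ⟨h1, h2⟩ := integrable_step (hFle t) hU (H := fun a => H a (t + 1))
      (ξ := fun a ω => S a (t + 1) ω - S a t ω)
      (fun a => hH a (t + 1) (by omega) ht)
      (fun a => (hSint a (t + 1) ht).sub (hSint a t (by omega)))
      (fun a => by
        have h3 := condExp_sub (hSint a (t + 1) ht) (hSint a t (by omega)) (F t)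
        have h4 := hmart a t (t + 1) (by omega) ht
        have h5 := condExp_of_stronglyMeasurable (hFle t)
          (hSm a t (by omega)).stronglyMeasurable (hSint a t (by omega))
        filter_upwards [h3, h4] with ω h6 h7
        refine h6.trans ?_
        rw [Pi.sub_apply, h5, ← h7, sub_self, Pi.zero_apply])
      hY hle
    obtain ⟨h3, h4⟩ := ih (by omega) _ integrable_condExp h1
    exact ⟨(h2 h3).1, (h2 h3).2.trans h4⟩

/-- The disjoint union of `N` copies of a measure. -/
noncomputable def copies [MeasurableSpace Ω] (N : ℕ) (μ : Measure Ω) : Measure (Fin N × Ω) :=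
  ∑ i, μ.map (Prod.mk i)

instance [MeasurableSpace Ω] (N : ℕ) (μ : Measure Ω) [IsFiniteMeasure μ] :
    IsFiniteMeasure (copies N μ) := by
  unfold copies
  infer_instance

lemma ae_copies [MeasurableSpace Ω] {N : ℕ} {μ : Measure Ω} {q : Fin N × Ω → Prop} :
    (∀ᵐ p ∂(copies N μ), q p) ↔ ∀ i, ∀ᵐ ω ∂μ, q (i, ω) := by
  simp only [copies, ae_finsetSum_measure_iff, Finset.mem_univ, true_imp_iff,
    (measurableEmbedding_prodMk_left _).ae_map_iff]

lemma integrable_copies [MeasurableSpace Ω] {N : ℕ} {μ : Measure Ω} {g : Fin N × Ω → ℝ} :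
    Integrable g (copies N μ) ↔ ∀ i, Integrable (fun ω => g (i, ω)) μ := by
  simp only [copies, integrable_finsetSum_measure, Finset.mem_univ, true_imp_iff,
    (measurableEmbedding_prodMk_left _).integrable_map_iff, Function.comp_def]

lemma integral_copies [MeasurableSpace Ω] {N : ℕ} {μ : Measure Ω} {g : Fin N × Ω → ℝ}
    (hg : Integrable g (copies N μ)) :
    ∫ p, g p ∂(copies N μ) = ∑ i, ∫ ω, g (i, ω) ∂μ := by
  have hg' := integrable_finsetSum_measure.1 hg
  rw [copies, integral_finsetSum_measure hg']
  exact Finset.sum_congr rfl fun i _ => (measurableEmbedding_prodMk_left i).integral_map g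

/-- The sets all of whose `i`-th slices are measurable with respect to `m i`. -/
@[reducible] def sliceSpace {N : ℕ} (m : Fin N → MeasurableSpace Ω) : MeasurableSpace (Fin N × Ω) :=
  ⨅ i, (m i).map (Prod.mk i)

lemma measurable_sliceSpace {N : ℕ} {m : Fin N → MeasurableSpace Ω} {g : Fin N × Ω → ℝ} :
    Measurable[sliceSpace m] g ↔ ∀ i, Measurable[m i] fun ω => g (i, ω) := by
  constructor
  · intro hg i s hs
    have h1 := hg hs
    exact (MeasurableSpace.measurableSet_iInf.1 h1) i
  · intro hg s hs
    exact MeasurableSpace.measurableSet_iInf.2 fun i => hg i hs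

lemma sliceSpace_mono {N : ℕ} {m m' : Fin N → MeasurableSpace Ω} (h : ∀ i, m i ≤ m' i) :
    sliceSpace m ≤ sliceSpace m' :=
  iInf_mono fun i _ hs => h i _ hs

/-- The information available for trading up to time `t`: none at `t = 0`, and
`F (t - 1)` for `t ≥ 1`. -/
@[reducible] def predictableSpaces {N : ℕ} (F : Fin N → ℕ → MeasurableSpace Ω) :
    ℕ → MeasurableSpace (Fin N × Ω)
  | 0 => ⊥
  | t + 1 => sliceSpace fun i => F i t

lemma monotone_predictableSpaces {N : ℕ} {F : Fin N → ℕ → MeasurableSpace Ω}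
    (hF : ∀ i, Monotone (F i)) : Monotone (predictableSpaces F) := by
  refine monotone_nat_of_le_succ fun t => ?_
  cases t with
  | zero => exact bot_le
  | succ t => exact sliceSpace_mono fun i => hF i t.le_succ

lemma mul_mem_predictableSpan {ι : Type*} {m : ι → MeasurableSpace Ω} {ξ : ι → Ω → ℝ}
    {s : Finset ι} {a : ι} (ha : a ∈ s) {g : Ω → ℝ} (hg : Measurable[m a] g) :
    (fun ω => g ω * ξ a ω) ∈ predictableSpan m ξ s := by
  classical
  refine ⟨fun b => if b = a then g else fun _ => 0, fun b _ => ?_, ?_⟩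
  · dsimp only
    split_ifs with h
    · exact h ▸ hg
    · exact measurable_const
  · funext ω
    rw [Finset.sum_eq_single a]
    · simp
    · intro b _ hb
      simp [hb]
    · exact fun h => (h ha).elim

/-- The weighted generators of the attainable exchanges and gains of all agents, as functions on
the disjoint union of `N` copies of `Ω`. -/
def marketGenerator {A : Type*} {N R : ℕ} (i₀ : Fin N) (w : Fin N → Ω → ℝ)
    (S : Fin N → A → ℕ → Ω → ℝ) (Ys : Fin R → Fin N → Ω → ℝ) :
    (Fin N ⊕ Fin R) ⊕ (A × ℕ) → Fin N × Ω → ℝ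
  | .inl (.inl j), p => w p.1 p.2 * ((if p.1 = j then 1 else 0) - if p.1 = i₀ then 1 else 0)
  | .inl (.inr r), p => w p.1 p.2 * Ys r p.1 p.2
  | .inr (a, t), p => w p.1 p.2 * (S p.1 a t p.2 - S p.1 a (t - 1) p.2)

lemma exists_eq_const_of_measurable_bot [Nonempty Ω] {h : Ω → ℝ} (hh : Measurable[⊥] h) :
    ∃ c, ∀ ω, h ω = c := by
  obtain ⟨ω₀⟩ := ‹Nonempty Ω›
  refine ⟨h ω₀, fun ω => ?_⟩
  have h1 : MeasurableSet[⊥] (h ⁻¹' {h ω₀}) := hh (measurableSet_singleton _)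
  rcases MeasurableSpace.measurableSet_bot_iff.1 h1 with h2 | h2
  · have : ω₀ ∈ h ⁻¹' {h ω₀} := rfl
    simp [h2] at this
  · have : ω ∈ h ⁻¹' {h ω₀} := h2 ▸ Set.mem_univ ω
    exact this

/-- The trading date of a generator; exchanges take place before any information is revealed. -/
def generatorDate {A : Type*} {N R : ℕ} : (Fin N ⊕ Fin R) ⊕ (A × ℕ) → ℕ :=
  Sum.elim (fun _ => 0) Prod.snd

/-- The weighted attainable positions of all agents. -/
def weightedPositions {A : Type*} [Fintype A] {N R : ℕ} (F : Fin N → ℕ → MeasurableSpace Ω)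
    (T : ℕ) (i₀ : Fin N) (w : Fin N → Ω → ℝ)
    (S : Fin N → A → ℕ → Ω → ℝ) (Ys : Fin R → Fin N → Ω → ℝ) : Set (Fin N × Ω → ℝ) :=
  predictableSpan (fun a => predictableSpaces F (generatorDate a)) (marketGenerator i₀ w S Ys)
    (Finset.univ.disjSum (Finset.univ ×ˢ Finset.Icc 1 T))

lemma noArb_weightedPositions {A : Type*} [Fintype A] [MeasurableSpace Ω] {P : Measure Ω}
    [IsProbabilityMeasure P] {N R T : ℕ} {F : Fin N → ℕ → MeasurableSpace Ω} (i₀ : Fin N)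
    {w : Fin N → Ω → ℝ} (hw : ∀ i ω, 0 < w i ω)
    {S : Fin N → A → ℕ → Ω → ℝ} {Ys : Fin R → Fin N → Ω → ℝ}
    (hNCA : NCA P (fun i => marketGains (F i) T (S i)) (spanExch Ys)) :
    NoArb (copies N P) (weightedPositions F T i₀ w S Ys) := by
  rintro k ⟨h, hh, rfl⟩ hk
  have : Nonempty Ω := nonempty_of_isProbabilityMeasure P
  have : Nonempty (Fin N × Ω) := ⟨(i₀, Classical.arbitrary Ω)⟩
  have hc : ∀ b, ∃ c, ∀ p, h (.inl b) p = c := fun b =>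
    exists_eq_const_of_measurable_bot (hh (.inl b) (by simp))
  choose c hc using hc
  have hH : ∀ i a s, 1 ≤ s → s ≤ T → Measurable[F i (s - 1)] fun ω => h (.inr (a, s)) (i, ω) := by
    intro i a s hs1 hsT
    have h1 := hh (.inr (a, s)) (by simp [hs1, hsT])
    obtain ⟨u, rfl⟩ : ∃ u, s = u + 1 := ⟨s - 1, by omega⟩
    exact measurable_sliceSpace.1 h1 i
  set x : Fin N → ℝ :=
    fun i => ∑ j, c (.inl j) * ((if i = j then 1 else 0) - if i = i₀ then 1 else 0) with hx
  have hx0 : ∑ i, x i = 0 := by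
    simp only [hx]
    rw [Finset.sum_comm]
    refine Finset.sum_eq_zero fun j _ => ?_
    rw [← Finset.mul_sum, Finset.sum_sub_distrib]
    simp
  set g : Fin N → Ω → ℝ := fun i ω => ∑ a, ∑ s ∈ Finset.Icc 1 T,
    h (.inr (a, s)) (i, ω) * (S i a s ω - S i a (s - 1) ω) with hg
  set y : Fin N → Ω → ℝ := fun i ω => x i + ∑ r, c (.inr r) * Ys r i ω with hy
  have heq : ∀ i ω, ∑ b ∈ Finset.univ.disjSum (Finset.univ ×ˢ Finset.Icc 1 T),
      h b (i, ω) * marketGenerator i₀ w S Ys b (i, ω) = w i ω * (g i ω + y i ω) := by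
    intro i ω
    rw [Finset.sum_disjSum, Fintype.sum_sum_type, Finset.sum_product]
    simp only [hc, marketGenerator, hg, hy, hx, mul_add, Finset.mul_sum]
    rw [add_comm]
    congr 1
    · exact Finset.sum_congr rfl fun a _ => Finset.sum_congr rfl fun s _ => by ring
    · congr 1 <;> exact Finset.sum_congr rfl fun a _ => by ring
  simp only [ae_copies, heq] at hk ⊢
  have h1 := hNCA g y ⟨x, fun r => c (.inr r), hx0, fun i => rfl⟩
    (fun i => ⟨fun a s ω => h (.inr (a, s)) (i, ω), hH i, rfl⟩)
    (fun i => (hk i).mono fun ω hω => nonneg_of_mul_nonneg_right hω (hw i ω))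
  intro i
  filter_upwards [h1 i] with ω hω
  rw [hω, mul_zero]

lemma exists_slice_density {A : Type*} [Fintype A] [m0 : MeasurableSpace Ω] {P : Measure Ω}
    [IsProbabilityMeasure P] {N R T : ℕ} {F : Fin N → ℕ → MeasurableSpace Ω}
    (hFmono : ∀ i, Monotone (F i)) (hFle : ∀ i t, F i t ≤ m0) (i₀ : Fin N)
    {w : Fin N → Ω → ℝ} (hwm : ∀ i, Measurable (w i)) (hw : ∀ i ω, 0 < w i ω)
    {S : Fin N → A → ℕ → Ω → ℝ} (hSm : ∀ i a t, t ≤ T → Measurable (S i a t))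
    {Ys : Fin R → Fin N → Ω → ℝ} (hYs : ∀ r i, Measurable (Ys r i))
    (hw1 : ∀ i ω, w i ω ≤ 1) (hwS : ∀ i a t, t ≤ T → ∀ ω, |w i ω * S i a t ω| ≤ 1)
    (hwY : ∀ r i ω, |w i ω * Ys r i ω| ≤ 1)
    (hNCA : NCA P (fun i => marketGains (F i) T (S i)) (spanExch Ys)) :
    ∃ z : Fin N → Ω → ℝ, (∀ i, Measurable (z i)) ∧ (∀ i ω, 0 < z i ω) ∧
      (∀ i, Integrable (z i) P) ∧
      (∀ j, ∫ ω, z j ω * w j ω ∂P = ∫ ω, z i₀ ω * w i₀ ω ∂P) ∧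
      (∀ r, ∑ i, ∫ ω, z i ω * (w i ω * Ys r i ω) ∂P = 0) ∧
      ∀ i a t, t + 1 ≤ T → ∀ B, MeasurableSet[F i t] B →
        ∫ ω in B, z i ω * (w i ω * (S i a (t + 1) ω - S i a t ω)) ∂P = 0 := by
  have hNA := noArb_weightedPositions i₀ hw hNCA
  have hst : MeasStable ⊥ (weightedPositions F T i₀ w S Ys) :=
    measStable_predictableSpan _ fun a _ => bot_le
  obtain ⟨z, hzm, hz, hzint, hzV⟩ := exists_pos_density hst.add
    (fun c => hst.mul _ (@measurable_const _ _ _ ⊥ c))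
    ⟨_, fun _ _ => 0, fun a _ => @measurable_const _ _ _ (_) _, rfl⟩
    (dominatedClosed_predictableSpan _ (monotone_predictableSpaces hFmono) _ _ _ hNA) hNA
  have hbdd : ∀ k : Fin N × Ω → ℝ, Measurable k → ∀ C, (∀ p, |k p| ≤ C) →
      Integrable (fun p => z p * k p) (copies N P) := fun k hk C hC =>
    hzint.mul_bdd hk.aestronglyMeasurable (Eventually.of_forall hC)
  have hz0 : ∀ k ∈ weightedPositions F T i₀ w S Ys, Measurable k → ∀ C, (∀ p, |k p| ≤ C) →
      ∑ i, ∫ ω, z (i, ω) * k (i, ω) ∂P = 0 := by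
    intro k hkV hk C hC
    rw [← integral_copies (hbdd k hk C hC)]
    have hL : MemLp k 2 (copies N P) :=
      MemLp.of_bound hk.aestronglyMeasurable C (Eventually.of_forall hC)
    have h1 := hzV k hkV hL
    have h2 := hzV _ (hst.mul _ (@measurable_const _ _ _ ⊥ (-1 : ℝ)) k hkV) (hL.const_mul (-1))
    simp only [neg_mul, one_mul, mul_neg, integral_neg] at h2
    linarith
  have hgen : ∀ b ∈ Finset.univ.disjSum (Finset.univ ×ˢ Finset.Icc 1 T),
      ∀ g : Fin N × Ω → ℝ, Measurable[predictableSpaces F (generatorDate b)] g →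
      Measurable (fun p => g p * marketGenerator i₀ w S Ys b p) →
      ∀ C, (∀ p, |g p * marketGenerator i₀ w S Ys b p| ≤ C) →
      ∑ i, ∫ ω, z (i, ω) * (g (i, ω) * marketGenerator i₀ w S Ys b (i, ω)) ∂P = 0 :=
    fun b hb g hg => hz0 _ (mul_mem_predictableSpan hb hg)
  refine ⟨fun i ω => z (i, ω), fun i => hzm.comp measurable_prodMk_left, fun i ω => hz _,
    integrable_copies.1 hzint, fun j => ?_, fun r => ?_, fun i a t ht B hB => ?_⟩
  · have hconst : ∀ i, ∫ ω, z (i, ω) * (1 * marketGenerator i₀ w S Ys (.inl (.inl j)) (i, ω)) ∂P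
        = (∫ ω, z (i, ω) * w i ω ∂P) * ((if i = j then 1 else 0) - if i = i₀ then 1 else 0) := by
      intro i
      rw [← integral_mul_const]
      refine integral_congr_ae (Eventually.of_forall fun ω => ?_)
      simp only [marketGenerator]
      ring
    have h1 := hgen (.inl (.inl j)) (by simp) (fun _ => 1) (@measurable_const _ _ _ (_) _)
      (measurable_from_prod_countable_right fun i => by
        simp only [marketGenerator]
        exact ((hwm i).mul_const
          ((if i = j then 1 else 0) - if i = i₀ then 1 else 0)).const_mul 1) 1 (by
        intro p
        simp only [marketGenerator, one_mul]
        rw [abs_mul, abs_of_pos (hw _ _)]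
        refine mul_le_one₀ (hw1 _ _) (abs_nonneg _) ?_
        split_ifs <;> simp)
    simp only [hconst, mul_sub, mul_ite, mul_one, mul_zero, Finset.sum_sub_distrib,
      Finset.sum_ite_eq', Finset.mem_univ, if_true] at h1
    linarith
  · simpa [marketGenerator] using hgen (.inl (.inr r)) (by simp) (fun _ => 1)
      (@measurable_const _ _ _ (_) _)
      (measurable_from_prod_countable_right fun i => by
        simp only [marketGenerator]
        exact (((hwm i).mul (hYs r i)).const_mul _)) 1 (by
        intro p
        simpa [marketGenerator] using hwY r p.1 p.2)
  · classical
    have hgm : Measurable[predictableSpaces F (t + 1)]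
        (({i} ×ˢ B : Set (Fin N × Ω)).indicator fun _ => (1 : ℝ)) := by
      refine measurable_sliceSpace.2 fun j => ?_
      by_cases hj : j = i
      · subst hj
        have : (fun ω => ({j} ×ˢ B : Set (Fin N × Ω)).indicator (fun _ => (1 : ℝ)) (j, ω))
            = B.indicator fun _ => 1 := by
          funext ω
          simp [Set.indicator_apply]
        rw [this]
        exact (@measurable_const _ _ _ (_) _).indicator hB
      · simp only [Set.indicator_apply, Set.mem_prod, Set.mem_singleton_iff, hj, false_and,
          if_false]
        exact @measurable_const _ _ _ (_) _
    have h1 := hgen (.inr (a, t + 1)) (by simp [ht]) _ hgm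
      (measurable_from_prod_countable_right fun j => by
        simp only [marketGenerator, Nat.add_sub_cancel]
        exact ((measurable_sliceSpace.1 hgm j).mono (hFle j t) le_rfl).mul
          ((hwm j).mul ((hSm j a _ ht).sub (hSm j a t (by omega))))) 2 (by
        intro p
        simp only [marketGenerator, Nat.add_sub_cancel]
        have h2 : |w p.1 p.2 * (S p.1 a (t + 1) p.2 - S p.1 a t p.2)| ≤ 2 := by
          rw [mul_sub]
          refine (abs_sub _ _).trans ?_
          linarith [hwS p.1 a (t + 1) ht p.2, hwS p.1 a t (by omega) p.2]
        rw [Set.indicator_apply]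
        split_ifs
        · simpa using h2
        · simp)
    rw [Finset.sum_eq_single i] at h1
    · rw [← h1, ← integral_indicator (hFle i t B hB)]
      refine integral_congr_ae (Eventually.of_forall fun ω => ?_)
      simp [Set.indicator_apply, marketGenerator]
    · intro j _ hj
      simp [hj]
    · simp

/-- The measure with density `d` with respect to `P`. -/
noncomputable def densityMeasure [MeasurableSpace Ω] (P : Measure Ω) (d : Ω → ℝ) : Measure Ω :=
  P.withDensity fun ω => ENNReal.ofReal (d ω)

section densityMeasure

variable [MeasurableSpace Ω] {P : Measure Ω} {d : Ω → ℝ}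

lemma densityMeasure_absolutelyContinuous : densityMeasure P d ≪ P :=
  withDensity_absolutelyContinuous _ _

lemma absolutelyContinuous_densityMeasure (hd : Measurable d) (hpos : ∀ ω, 0 < d ω) :
    P ≪ densityMeasure P d :=
  withDensity_absolutelyContinuous' hd.ennreal_ofReal.aemeasurable
    (Eventually.of_forall fun ω => by simpa using hpos ω)

lemma integrable_densityMeasure (hd : Measurable d) (hpos : ∀ ω, 0 < d ω) {g : Ω → ℝ} :
    Integrable g (densityMeasure P d) ↔ Integrable (fun ω => d ω * g ω) P := by
  rw [densityMeasure, integrable_withDensity_iff_integrable_smul' hd.ennreal_ofReal (by simp)]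
  simp only [ENNReal.toReal_ofReal (hpos _).le, smul_eq_mul]

lemma setIntegral_densityMeasure (hd : Measurable d) (hpos : ∀ ω, 0 < d ω) (g : Ω → ℝ)
    {B : Set Ω} (hB : MeasurableSet B) :
    ∫ ω in B, g ω ∂(densityMeasure P d) = ∫ ω in B, d ω * g ω ∂P := by
  rw [densityMeasure, setIntegral_withDensity_eq_setIntegral_toReal_smul hd.ennreal_ofReal
    (by simp) _ hB]
  simp only [ENNReal.toReal_ofReal (hpos _).le, smul_eq_mul]

lemma isProbabilityMeasure_densityMeasure (hpos : ∀ ω, 0 < d ω)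
    (hint : Integrable d P) (h1 : ∫ ω, d ω ∂P = 1) :
    IsProbabilityMeasure (densityMeasure P d) := by
  refine ⟨?_⟩
  rw [densityMeasure, withDensity_apply _ MeasurableSet.univ, Measure.restrict_univ,
    ← ofReal_integral_eq_lintegral_ofReal hint (Eventually.of_forall fun ω => (hpos ω).le), h1,
    ENNReal.ofReal_one]

end densityMeasure

/-- Collective fundamental theorem of asset pricing: under no collective arbitrage there are
equivalent martingale measures that integrate prescribed random variables and price all
exchanges fairly. -/
theorem exists_martingale_measures {A : Type*} [Fintype A] [m0 : MeasurableSpace Ω]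
    {P : Measure Ω} [IsProbabilityMeasure P] {N R T : ℕ} {F : Fin N → ℕ → MeasurableSpace Ω}
    (hFmono : ∀ i, Monotone (F i)) (hFle : ∀ i t, F i t ≤ m0) (hN : 1 ≤ N)
    {S : Fin N → A → ℕ → Ω → ℝ} (hSm : ∀ i a t, t ≤ T → Measurable[F i t] (S i a t))
    {Ys : Fin R → Fin N → Ω → ℝ} (hYs : ∀ r i, Measurable (Ys r i))
    {φ : Fin N → Ω → ℝ} (hφ : ∀ i, Measurable (φ i))
    (hNCA : NCA P (fun i => marketGains (F i) T (S i)) (spanExch Ys)) :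
    ∃ Q : Fin N → Measure Ω,
      (∀ i, IsProbabilityMeasure (Q i) ∧ Q i ≪ P ∧ P ≪ Q i ∧ Integrable (φ i) (Q i) ∧
        (∀ r, Integrable (Ys r i) (Q i)) ∧
        ∀ a, (∀ t, t ≤ T → Integrable (S i a t) (Q i)) ∧
          ∀ s t, s ≤ t → t ≤ T → S i a s =ᵐ[Q i] (Q i)[S i a t | F i s]) ∧
      ∀ r, ∑ i, ∫ ω, Ys r i ω ∂(Q i) = 0 := by
  have hSm' : ∀ i a t, t ≤ T → Measurable (S i a t) :=
    fun i a t ht => (hSm i a t ht).mono (hFle i t) le_rfl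
  set Φ : Fin N → Ω → ℝ := fun i ω =>
    |φ i ω| + ∑ a, ∑ t ∈ Finset.range (T + 1), |S i a t ω| + ∑ r, |Ys r i ω| with hΦ
  have hΦm : ∀ i, Measurable (Φ i) := fun i =>
    ((hφ i).abs.add (Finset.measurable_fun_sum _ fun a _ => Finset.measurable_fun_sum _
      fun t ht => (hSm' i a t (by simpa [Nat.lt_succ_iff] using ht)).abs)).add
      (Finset.measurable_fun_sum _ fun r _ => (hYs r i).abs)
  have hS0 : ∀ i a ω, 0 ≤ ∑ t ∈ Finset.range (T + 1), |S i a t ω| := fun i a ω =>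
    Finset.sum_nonneg fun t _ => abs_nonneg _
  have hSS0 : ∀ i ω, 0 ≤ ∑ a, ∑ t ∈ Finset.range (T + 1), |S i a t ω| := fun i ω =>
    Finset.sum_nonneg fun a _ => hS0 i a ω
  have hY0 : ∀ i ω, 0 ≤ ∑ r, |Ys r i ω| := fun i ω => Finset.sum_nonneg fun r _ => abs_nonneg _
  have hφΦ : ∀ i ω, |φ i ω| ≤ Φ i ω := fun i ω => by
    simp only [hΦ]
    linarith [hSS0 i ω, hY0 i ω]
  have hSΦ : ∀ i a t, t ≤ T → ∀ ω, |S i a t ω| ≤ Φ i ω := fun i a t ht ω => by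
    have h1 : |S i a t ω| ≤ ∑ t ∈ Finset.range (T + 1), |S i a t ω| :=
      Finset.single_le_sum (f := fun t => |S i a t ω|) (fun t _ => abs_nonneg _)
        (Finset.mem_range.2 (Nat.lt_succ_of_le ht))
    have h2 := Finset.single_le_sum (f := fun a => ∑ t ∈ Finset.range (T + 1), |S i a t ω|)
      (fun a _ => hS0 i a ω) (Finset.mem_univ a)
    simp only [hΦ]
    linarith [abs_nonneg (φ i ω), hY0 i ω]
  have hYΦ : ∀ r i ω, |Ys r i ω| ≤ Φ i ω := fun r i ω => by
    have h1 := Finset.single_le_sum (f := fun r => |Ys r i ω|) (fun r _ => abs_nonneg _)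
      (Finset.mem_univ r)
    simp only [hΦ]
    linarith [abs_nonneg (φ i ω), hSS0 i ω]
  have hΦ0 : ∀ i ω, 0 ≤ Φ i ω := fun i ω => (abs_nonneg _).trans (hφΦ i ω)
  have hΦ1 : ∀ i ω, 0 < 1 + Φ i ω := fun i ω => by linarith [hΦ0 i ω]
  set w : Fin N → Ω → ℝ := fun i ω => (1 + Φ i ω)⁻¹ with hwdef
  have hw : ∀ i ω, 0 < w i ω := fun i ω => inv_pos.2 (hΦ1 i ω)
  have hwm : ∀ i, Measurable (w i) := fun i => ((hΦm i).const_add 1).inv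
  have hwle : ∀ i ω x, |x| ≤ Φ i ω → |w i ω * x| ≤ 1 := fun i ω x hx => by
    rw [abs_mul, abs_of_pos (hw i ω)]
    simp only [hwdef]
    rw [inv_mul_le_iff₀ (hΦ1 i ω)]
    linarith
  have hw1 : ∀ i ω, w i ω ≤ 1 := fun i ω => inv_le_one_of_one_le₀ (by linarith [hΦ0 i ω])
  obtain ⟨z, hzm, hz, hzint, hzeq, hzY, hzS⟩ := exists_slice_density hFmono hFle ⟨0, hN⟩ hwm hw
    hSm' hYs hw1 (fun i a t ht ω => hwle i ω _ (hSΦ i a t ht ω))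
    (fun r i ω => hwle i ω _ (hYΦ r i ω)) hNCA
  set c : ℝ := ∫ ω, z ⟨0, hN⟩ ω * w ⟨0, hN⟩ ω ∂P with hc
  have hwint : ∀ i, Integrable (fun ω => z i ω * w i ω) P := fun i =>
    (hzint i).mul_bdd (c := 1) (hwm i).aestronglyMeasurable (Eventually.of_forall fun ω => by
      rw [Real.norm_eq_abs, abs_of_pos (hw i ω)]
      exact hw1 i ω)
  have hcpos : 0 < c := by
    rw [hc, integral_pos_iff_support_of_nonneg
      (fun ω => (mul_pos (hz _ ω) (hw _ ω)).le) (hwint _)]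
    have : (Function.support fun ω => z ⟨0, hN⟩ ω * w ⟨0, hN⟩ ω) = Set.univ :=
      Set.eq_univ_of_forall fun ω => (mul_pos (hz _ ω) (hw _ ω)).ne'
    rw [this, measure_univ]
    exact one_pos
  set d : Fin N → Ω → ℝ := fun i ω => z i ω * w i ω / c with hd
  have hdm : ∀ i, Measurable (d i) := fun i => ((hzm i).mul (hwm i)).div_const c
  have hdpos : ∀ i ω, 0 < d i ω := fun i ω => div_pos (mul_pos (hz i ω) (hw i ω)) hcpos
  have hdint : ∀ i, Integrable (d i) P := fun i => (hwint i).div_const c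
  have hd1 : ∀ i, ∫ ω, d i ω ∂P = 1 := fun i => by
    simp only [hd]
    rw [integral_div, hzeq i, div_self hcpos.ne']
  have hdmul : ∀ i ω x, d i ω * x = c⁻¹ * (z i ω * (w i ω * x)) := fun i ω x => by
    simp only [hd]
    ring
  have hprob : ∀ i, IsProbabilityMeasure (densityMeasure P (d i)) := fun i =>
    isProbabilityMeasure_densityMeasure (hdpos i) (hdint i) (hd1 i)
  have hint : ∀ i (g : Ω → ℝ), Measurable g → (∀ ω, |g ω| ≤ Φ i ω) →
      Integrable g (densityMeasure P (d i)) := fun i g hg hgΦ => by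
    rw [integrable_densityMeasure (hdm i) (hdpos i)]
    simp only [hdmul]
    exact ((hzint i).mul_bdd ((hwm i).mul hg).aestronglyMeasurable
      (Eventually.of_forall fun ω => hwle i ω _ (hgΦ ω))).const_mul _
  have hSint : ∀ i a t, t ≤ T → Integrable (S i a t) (densityMeasure P (d i)) :=
    fun i a t ht => hint i _ (hSm' i a t ht) (hSΦ i a t ht)
  have hstep : ∀ i a t, t + 1 ≤ T → ∀ B, MeasurableSet[F i t] B →
      ∫ ω in B, S i a (t + 1) ω ∂(densityMeasure P (d i))
        = ∫ ω in B, S i a t ω ∂(densityMeasure P (d i)) := fun i a t ht B hB => by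
    rw [← sub_eq_zero, ← integral_sub (hSint i a _ ht).integrableOn
      (hSint i a t (by omega)).integrableOn,
      setIntegral_densityMeasure (hdm i) (hdpos i) _ (hFle i t B hB)]
    simp only [hdmul]
    rw [integral_const_mul, hzS i a t ht B hB, mul_zero]
  refine ⟨fun i => densityMeasure P (d i), fun i => ⟨hprob i, densityMeasure_absolutelyContinuous,
    absolutelyContinuous_densityMeasure (hdm i) (hdpos i), hint i _ (hφ i) (hφΦ i),
    fun r => hint i _ (hYs r i) (hYΦ r i), fun a => ⟨hSint i a, fun s t hst ht => ?_⟩⟩,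
    fun r => ?_⟩
  · refine ae_eq_condExp_of_forall_setIntegral_eq (hFle i s) (hSint i a t ht)
      (fun B _ _ => (hSint i a s (hst.trans ht)).integrableOn) (fun B hB _ => ?_)
      (hSm i a s (hst.trans ht)).stronglyMeasurable.aestronglyMeasurable
    induction t, hst using Nat.le_induction with
    | base => rfl
    | succ t hst ih =>
      rw [hstep i a t ht B (hFmono i hst B hB)]
      exact ih (by omega)
  · have h1 : ∀ i, ∫ ω, Ys r i ω ∂(densityMeasure P (d i))
        = c⁻¹ * ∫ ω, z i ω * (w i ω * Ys r i ω) ∂P := fun i => by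
      rw [← setIntegral_univ, setIntegral_densityMeasure (hdm i) (hdpos i) _ MeasurableSet.univ,
        setIntegral_univ, ← integral_const_mul]
      simp only [hdmul]
    simp only [h1, ← Finset.mul_sum, hzY r, mul_zero]

/-- The assets in `A` together with the additional asset `Z`; the remaining assets are replaced
by constant ones. -/
def extendedAssets {J : ℕ} (A : Finset (Fin J)) (X : Fin J → ℕ → Ω → ℝ) (Z : ℕ → Ω → ℝ) :
    Option (Fin J) → ℕ → Ω → ℝ
  | none => Z
  | some j => fun t ω => if j ∈ A then X j t ω else 0

lemma extGainsSet_eq_marketGains {J : ℕ} (F : ℕ → MeasurableSpace Ω) (T : ℕ)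
    (A : Finset (Fin J)) (X : Fin J → ℕ → Ω → ℝ) (Z : ℕ → Ω → ℝ) :
    extGainsSet F T A X Z = marketGains F T (extendedAssets A X Z) := by
  have hsum : ∀ (H : Fin J → ℕ → Ω → ℝ) ω, ∑ j, ∑ s ∈ Finset.Icc 1 T, H j s ω *
      ((if j ∈ A then X j s ω else 0) - if j ∈ A then X j (s - 1) ω else 0)
      = ∑ j ∈ A, ∑ s ∈ Finset.Icc 1 T, H j s ω * (X j s ω - X j (s - 1) ω) := by
    intro H ω
    rw [← Finset.sum_subset (Finset.subset_univ A)]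
    · exact Finset.sum_congr rfl fun j hj => by simp [hj]
    · intro j _ hj
      simp [hj]
  ext g
  constructor
  · rintro ⟨H, G, hH, hG, rfl⟩
    refine ⟨fun a => a.elim G fun j => if j ∈ A then H j else fun _ _ => 0, ?_, ?_⟩
    · rintro (_ | j) s hs1 hsT
      · exact hG s hs1 hsT
      · by_cases hj : j ∈ A
        · simpa [hj] using hH j hj s hs1 hsT
        · simp [hj]
    · funext ω
      simp only [Fintype.sum_option, extendedAssets, Option.elim]
      rw [hsum, add_comm]
      congr 1
      refine Finset.sum_congr rfl fun j hj => by simp [hj]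
  · rintro ⟨H, hH, rfl⟩
    refine ⟨fun j => H (some j), H none, fun j _ => hH (some j), hH none, ?_⟩
    funext ω
    simp only [Fintype.sum_option, extendedAssets]
    rw [hsum, add_comm]

lemma integrable_spanExch [MeasurableSpace Ω] {N R : ℕ} {Ys : Fin R → Fin N → Ω → ℝ}
    {Q : Fin N → Measure Ω} [∀ i, IsFiniteMeasure (Q i)]
    (hY : ∀ r i, Integrable (Ys r i) (Q i)) {y : Fin N → Ω → ℝ} (hy : y ∈ spanExch Ys)
    (i : Fin N) : Integrable (y i) (Q i) := by
  obtain ⟨x, c, -, hxc⟩ := hy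
  rw [hxc i]
  exact (integrable_const _).add (integrable_finsetSum _ fun r _ => (hY r i).const_mul _)

lemma sum_integral_spanExch [MeasurableSpace Ω] {N R : ℕ} {Ys : Fin R → Fin N → Ω → ℝ}
    {Q : Fin N → Measure Ω} [∀ i, IsProbabilityMeasure (Q i)]
    (hY : ∀ r i, Integrable (Ys r i) (Q i)) (h0 : ∀ r, ∑ i, ∫ ω, Ys r i ω ∂(Q i) = 0)
    {y : Fin N → Ω → ℝ} (hy : y ∈ spanExch Ys) : ∑ i, ∫ ω, y i ω ∂(Q i) = 0 := by
  obtain ⟨x, c, hx, hxc⟩ := hy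
  have h1 : ∀ i, ∫ ω, y i ω ∂(Q i) = x i + ∑ r, c r * ∫ ω, Ys r i ω ∂(Q i) := fun i => by
    rw [hxc i, integral_add (integrable_const _)
      (integrable_finsetSum _ fun r _ => (hY r i).const_mul _),
      integral_finsetSum _ fun r _ => (hY r i).const_mul _]
    simp [integral_const_mul]
  simp only [h1]
  rw [Finset.sum_add_distrib, hx, Finset.sum_comm, zero_add]
  simp only [← Finset.mul_sum, h0, mul_zero, Finset.sum_const_zero]

/-- Collective martingale measures exclude collective arbitrage. -/
theorem NCA_of_martingale_measures {A : Type*} [Fintype A] [m0 : MeasurableSpace Ω]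
    {P : Measure Ω} {N T : ℕ} {F : Fin N → ℕ → MeasurableSpace Ω}
    (hFmono : ∀ i, Monotone (F i)) (hFle : ∀ i t, F i t ≤ m0)
    {S : Fin N → A → ℕ → Ω → ℝ} (hSm : ∀ i a t, t ≤ T → Measurable[F i t] (S i a t))
    {Q : Fin N → Measure Ω} [∀ i, IsFiniteMeasure (Q i)] (hQP : ∀ i, Q i ≪ P)
    (hPQ : ∀ i, P ≪ Q i) (hSint : ∀ i a t, t ≤ T → Integrable (S i a t) (Q i))
    (hmart : ∀ i a s t, s ≤ t → t ≤ T → S i a s =ᵐ[Q i] (Q i)[S i a t | F i s])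
    {Y : Set (Fin N → Ω → ℝ)} (hYint : ∀ y ∈ Y, ∀ i, Integrable (y i) (Q i))
    (hY : ∀ y ∈ Y, ∑ i, ∫ ω, y i ω ∂(Q i) ≤ 0) :
    NCA P (fun i => marketGains (F i) T (S i)) Y := by
  intro k y hy hk hpos
  have hpos' : ∀ i, ∀ᵐ ω ∂(Q i), 0 ≤ k i ω + y i ω := fun i => (hQP i).ae_le (hpos i)
  have h1 : ∀ i, _ := fun i => integral_marketGains_nonpos (hFmono i) (hFle i) (hSm i) (hSint i)
    (hmart i) (hk i) (hYint y hy i) (hpos' i)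
  have hint : ∀ i, Integrable (fun ω => k i ω + y i ω) (Q i) := fun i =>
    (h1 i).1.add (hYint y hy i)
  have hnn : ∀ i, 0 ≤ ∫ ω, k i ω + y i ω ∂(Q i) := fun i => integral_nonneg_of_ae (hpos' i)
  have hsum : ∑ i, ∫ ω, k i ω + y i ω ∂(Q i) = 0 := by
    refine le_antisymm ?_ (Finset.sum_nonneg fun i _ => hnn i)
    have h2 : ∀ i, ∫ ω, k i ω + y i ω ∂(Q i) ≤ ∫ ω, y i ω ∂(Q i) := fun i => by
      rw [integral_add (h1 i).1 (hYint y hy i)]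
      linarith [(h1 i).2]
    exact (Finset.sum_le_sum fun i _ => h2 i).trans (hY y hy)
  intro i
  have h3 := (Finset.sum_eq_zero_iff_of_nonneg fun i _ => hnn i).1 hsum i (Finset.mem_univ i)
  exact (hPQ i).ae_le ((integral_eq_zero_iff_of_nonneg_ae (hpos' i) (hint i)).1 h3)

/-- Conditional expectation given a trivial `σ`-algebra is the expectation. -/
lemma condExp_ae_eq_integral_of_trivial {m m0 : MeasurableSpace Ω} (hm : m ≤ m0)
    {Q : Measure Ω} [IsProbabilityMeasure Q] (hm0 : ∀ A, MeasurableSet[m] A → Q A = 0 ∨ Q A = 1)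
    {g : Ω → ℝ} (hg : Integrable g Q) : Q[g | m] =ᵐ[Q] fun _ => ∫ ω, g ω ∂Q := by
  refine (ae_eq_condExp_of_forall_setIntegral_eq hm hg
    (fun _ _ _ => (integrable_const _).integrableOn) (fun B hB _ => ?_)
    stronglyMeasurable_const.aestronglyMeasurable).symm
  rcases hm0 B hB with h0 | h1
  · rw [setIntegral_measure_zero _ h0, setIntegral_measure_zero _ h0]
  · have h2 : ∀ᵐ ω ∂Q, ω ∈ B := (prob_compl_eq_zero_iff (hm B hB)).2 h1
    rw [Measure.restrict_eq_self_of_ae_mem h2]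
    simp

/-- characterization of NCA(𝒴)-prices (Theorem BaseFTAPII). -/
theorem NCA_prices_eq_expectations
    {Ω : Type*} [m0 : MeasurableSpace Ω]
    (P : Measure Ω) [IsProbabilityMeasure P]
    (T J N : ℕ) (hT : 1 ≤ T) (hJ : 1 ≤ J) (hN : 1 ≤ N)
    (F : Fin N → ℕ → MeasurableSpace Ω)
    (hFmono : ∀ i, Monotone (F i))
    (hFle : ∀ i t, F i t ≤ m0)
    (hFzero : ∀ i, ∀ A : Set Ω, MeasurableSet[F i 0] A → P A = 0 ∨ P A = 1)
    (X : Fin J → ℕ → Ω → ℝ)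
    (assets : Fin N → Finset (Fin J))
    (hassets : ∀ i, (assets i).Nonempty)
    (hcover : ∀ j, ∃ i, j ∈ assets i)
    (hadapted : ∀ i, ∀ j ∈ assets i, ∀ t, t ≤ T → Measurable[F i t] (X j t))
    (R : ℕ) (Ys : Fin R → Fin N → Ω → ℝ)
    (hYsmeas : ∀ r i, Measurable[F i T] (Ys r i))
    (hNCA : NCA P (fun i => gainsSet (F i) T (assets i) X) (spanExch Ys))
    (f φ : Fin N → Ω → ℝ)
    (hfmeas : ∀ i, Measurable[F i T] (f i))
    (hφmeas : ∀ i, Measurable[F i T] (φ i))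
    (hdom_f : ∀ i, ∀ᵐ ω ∂P, |f i ω| ≤ φ i ω)
    (hdom_Y : ∀ r, ∀ i, ∀ᵐ ω ∂P, |Ys r i ω| ≤ φ i ω) :
    { pi : Fin N → ℝ | IsNCAPrice P F T assets X (spanExch Ys) f pi }
      = { pi : Fin N → ℝ | ∃ Q ∈ MeYphi P F T assets X (spanExch Ys) φ,
          ∀ i, pi i = ∫ ω, f i ω ∂(Q i) } := by
  ext pi
  constructor
  · rintro ⟨Z, hZm, hZ0, hZT, hext⟩
    simp only [extGainsSet_eq_marketGains] at hext
    obtain ⟨Q, hQ, hQY⟩ := exists_martingale_measures hFmono hFle hN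
      (S := fun i => extendedAssets (assets i) X (Z i))
      (fun i a t ht => by
        rcases a with _ | j
        · exact hZm i t ht
        · by_cases hj : j ∈ assets i
          · simpa [extendedAssets, hj] using hadapted i j hj t ht
          · simp [extendedAssets, hj])
      (fun r i => (hYsmeas r i).mono (hFle i T) le_rfl)
      (fun i => (hφmeas i).mono (hFle i T) le_rfl) hext
    have hprob : ∀ i, IsProbabilityMeasure (Q i) := fun i => (hQ i).1
    have hYint : ∀ r i, Integrable (Ys r i) (Q i) := fun r i => (hQ i).2.2.2.2.1 r
    refine ⟨Q, ⟨⟨fun i => ⟨hprob i, (hQ i).2.1, (hQ i).2.2.1, fun j hj => ?_⟩,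
      fun y hy i => integrable_spanExch hYint hy i,
      fun y hy => (sum_integral_spanExch hYint hQY hy).le⟩, fun i => (hQ i).2.2.2.1⟩, fun i => ?_⟩
    · simpa [extendedAssets, hj] using (hQ i).2.2.2.2.2 (some j)
    · have h1 : ∫ ω, Z i 0 ω ∂(Q i) = ∫ ω, Z i T ω ∂(Q i) := by
        rw [← integral_condExp (hFle i 0) (f := Z i T)]
        exact integral_congr_ae (((hQ i).2.2.2.2.2 none).2 0 T (Nat.zero_le T) le_rfl)
      rw [← integral_congr_ae ((hQ i).2.1.ae_le (hZT i)), ← h1,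
        integral_congr_ae ((hQ i).2.1.ae_le (hZ0 i))]
      simp
  · rintro ⟨Q, ⟨⟨hQ, hYint, hY⟩, hφint⟩, hpi⟩
    have hprob : ∀ i, IsProbabilityMeasure (Q i) := fun i => (hQ i).1
    have hQP : ∀ i, Q i ≪ P := fun i => (hQ i).2.1
    have hPQ : ∀ i, P ≪ Q i := fun i => (hQ i).2.2.1
    have hfint : ∀ i, Integrable (f i) (Q i) := fun i =>
      (hφint i).mono' ((hfmeas i).mono (hFle i T) le_rfl).aestronglyMeasurable
        ((hQP i).ae_le (hdom_f i))
    have hZm : ∀ i t, Measurable[F i t] ((Q i)[f i | F i t]) := fun i t =>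
      stronglyMeasurable_condExp.measurable
    refine ⟨fun i t => (Q i)[f i | F i t], fun i t _ => hZm i t, fun i => ?_, fun i => ?_, ?_⟩
    · rw [hpi i]
      refine (hPQ i).ae_le (condExp_ae_eq_integral_of_trivial (hFle i 0) (fun B hB => ?_) (hfint i))
      rcases hFzero i B hB with h0 | h1
      · exact .inl (hQP i h0)
      · refine .inr ((prob_compl_eq_zero_iff (hFle i 0 B hB)).1 (hQP i ?_))
        exact (prob_compl_eq_zero_iff (hFle i 0 B hB)).2 h1
    · dsimp only
      rw [condExp_of_stronglyMeasurable (hFle i T) (hfmeas i).stronglyMeasurable (hfint i)]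
    · simp only [extGainsSet_eq_marketGains]
      refine NCA_of_martingale_measures hFmono hFle (fun i a t ht => ?_) hQP hPQ
        (fun i a t ht => ?_) (fun i a s t hst ht => ?_) hYint hY
      · rcases a with _ | j
        · exact hZm i t
        · by_cases hj : j ∈ assets i
          · simpa [extendedAssets, hj] using hadapted i j hj t ht
          · simp [extendedAssets, hj]
      · rcases a with _ | j
        · exact integrable_condExp
        · by_cases hj : j ∈ assets i
          · simpa [extendedAssets, hj] using ((hQ i).2.2.2 j hj).1 t ht
          · simp [extendedAssets, hj]
      · rcases a with _ | j
        · exact (condExp_condExp_of_le (hFmono i hst) (hFle i t)).symm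
        · by_cases hj : j ∈ assets i
          · simpa [extendedAssets, hj] using ((hQ i).2.2.2 j hj).2 s t hst ht
          · have h0 : extendedAssets (assets i) X (fun t => (Q i)[f i | F i t]) (some j) = 0 := by
              funext t ω
              simp [extendedAssets, hj]
            rw [h0]
            simp only [Pi.zero_apply, condExp_zero]
            rfl

end CollectiveArb
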